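/- arXiv:1212.6498 — 3 statements merged into one kernel-verified Lean document; each statement's English description precedes it below -/
import Mathlib

section
/- Let X be a cosimplicial set and let C(X,M) = ⊕_q ℤX^q ⊗ M be the associated chain complex with coefficients in a ℤ-module M, with ℤX^q ⊗ M in degree −q and differential the alternating sum of the coface maps. Then the homology of C(X,M) is concentrated in degree 0, and H_0(C(X,M)) is a direct sum of one copy of M for each x ∈ X^0 with d^0 x = d^1 x. -/
/-!
STATEMENT 1: Let `X` be a cosimplicial set and `M` a `ℤ`-module.  The chain complex
`C(X,M) = ⊕_q ℤX^q ⊗ M` (with `ℤX^q ⊗ M ≅ (X^q →₀ M)` placed in degree `-q` and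
differential the alternating sum of the coface maps) has homology concentrated in
degree `0`, and `H_0(C(X,M))` is a direct sum of one copy of `M` for each
`x ∈ X^0` with `d^0 x = d^1 x`.
-/

open CategoryTheory

/-- The differential of the chain complex `C(X,M)`: the alternating sum of the maps
induced on `X^q →₀ M ≅ ℤX^q ⊗ M` by the coface maps `d^i = X.δ i`. -/
noncomputable def cosimpDiff (X : CosimplicialObject (Type)) (M : Type) [AddCommGroup M]
    (q : ℕ) :
    ((X.obj (SimplexCategory.mk q) →₀ M) →ₗ[ℤ]
      (X.obj (SimplexCategory.mk (q + 1)) →₀ M)) :=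
  ∑ i : Fin (q + 2), ((-1 : ℤ) ^ (i : ℕ)) • Finsupp.lmapDomain M ℤ (X.δ i)

/-!
For `q ≥ 1` and `x ∈ X^q`, let `L` be the number of leading cofaces of `x`, that is, the largest `L`
such that `x` lies in the images of `d^0, …, d^{L-1}`. The set of indices `j` with `d^i x` in the
image of `d^j` arises from that of `x` by inserting `i`, so `d^i` raises `L` by one if `i ≤ L` and
leaves it unchanged otherwise. Moreover `d^i x = d^0 x` for `i ≤ L`, and `d^i s^0 x = x` for
`i < L`. Let `h x = s^0 x` if `L` is odd and `h x = 0` if `L` is even. For even `L`, `h d x` is the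
alternating sum of `L + 1` copies of `x`; for odd `L`, the terms of `h d x` cancel those of `d h x`
with index at least `L`, leaving an alternating sum of `L` copies of `x`. Hence `d h + h d = 1`.

In degree `0`, the map `d^0` is injective and `d^0 x = d^1 y` forces `x = y`, so the kernel of
`d^0 - d^1` is spanned by the `x` with `d^0 x = d^1 x`.
-/

universe u v w

lemma sum_neg_one_pow_smul_of_odd {A : Type*} [AddCommGroup A] {N n : ℕ} (hn : n ≤ N)
    (hodd : Odd n) {f : Fin N → A} {a : A} (hlt : ∀ i : Fin N, i < n → f i = a)
    (hge : ∀ i : Fin N, n ≤ i → f i = 0) : ∑ i : Fin N, ((-1 : ℤ) ^ (i : ℕ)) • f i = a := by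
  obtain ⟨l, rfl⟩ := Nat.exists_eq_add_of_le hn
  have hinit (i : Fin n) : f (i.castAdd l) = a := hlt _ i.isLt
  have htail (i : Fin l) : f (i.natAdd n) = 0 := hge _ (Nat.le_add_right _ _)
  simp only [Fin.sum_univ_add, hinit, htail, smul_zero, Finset.sum_const_zero, add_zero,
    Fin.val_castAdd]
  rw [← Finset.sum_smul, Fin.sum_univ_eq_sum_range, neg_one_geom_sum,
    if_neg (Nat.not_even_iff_odd.mpr hodd), one_smul]

namespace CosimplicialSet

open Simplicial

variable {X : CosimplicialObject (Type u)} {k : ℕ}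

lemma δ_succ_δ_apply {i j : Fin (k + 2)} (h : i ≤ j) (x : X ^⦋k⦌) :
    X.δ j.succ (X.δ i x) = X.δ i.castSucc (X.δ j x) :=
  ConcreteCategory.congr_hom (X.δ_comp_δ h) x

lemma σ_δ_castSucc_apply (i : Fin (k + 1)) (x : X ^⦋k⦌) : X.σ i (X.δ i.castSucc x) = x :=
  ConcreteCategory.congr_hom X.δ_comp_σ_self x

lemma σ_δ_succ_apply (i : Fin (k + 1)) (x : X ^⦋k⦌) : X.σ i (X.δ i.succ x) = x :=
  ConcreteCategory.congr_hom X.δ_comp_σ_succ x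

lemma σ_succ_δ_castSucc_apply {i : Fin (k + 2)} {j : Fin (k + 1)} (h : i ≤ j.castSucc)
    (x : X ^⦋k + 1⦌) : X.σ j.succ (X.δ i.castSucc x) = X.δ i (X.σ j x) :=
  ConcreteCategory.congr_hom (X.δ_comp_σ_of_le h) x

lemma σ_castSucc_δ_succ_apply {i : Fin (k + 2)} {j : Fin (k + 1)} (h : j.castSucc < i)
    (x : X ^⦋k + 1⦌) : X.σ j.castSucc (X.δ i.succ x) = X.δ i (X.σ j x) :=
  ConcreteCategory.congr_hom (X.δ_comp_σ_of_gt h) x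

lemma eq_of_δ_castSucc_eq_δ_succ {i : Fin (k + 1)} {x y : X ^⦋k⦌}
    (h : X.δ i.castSucc x = X.δ i.succ y) : x = y := by
  rw [← σ_δ_castSucc_apply i x, h, σ_δ_succ_apply]

lemma mem_range_δ_of_δ_castSucc_eq_δ_succ {x : X ^⦋k + 1⦌} {i : Fin (k + 2)}
    (h : X.δ i.castSucc x = X.δ i.succ x) : x ∈ Set.range (X.δ i) := by
  cases i using Fin.lastCases with
  | last =>
    refine ⟨X.σ (Fin.last k) x, ?_⟩
    rw [← σ_castSucc_δ_succ_apply (Fin.castSucc_lt_last _), ← h]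
    exact σ_δ_succ_apply (Fin.last k).castSucc x
  | cast i =>
    refine ⟨X.σ i x, ?_⟩
    rw [← σ_succ_δ_castSucc_apply le_rfl, h, Fin.succ_castSucc, σ_δ_castSucc_apply]

lemma δ_castSucc_mem_range_δ_succ_iff {i j : Fin (k + 2)} (h : i ≤ j) {x : X ^⦋k + 1⦌} :
    X.δ i.castSucc x ∈ Set.range (X.δ j.succ) ↔ x ∈ Set.range (X.δ j) := by
  constructor
  · rintro ⟨y, hy⟩
    rcases h.eq_or_lt with rfl | hij
    · obtain rfl := eq_of_δ_castSucc_eq_δ_succ hy.symm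
      exact mem_range_δ_of_δ_castSucc_eq_δ_succ hy.symm
    · obtain ⟨i, rfl⟩ := Fin.exists_castSucc_eq.mpr (Fin.ne_last_of_lt hij)
      refine ⟨X.σ i y, ?_⟩
      rw [← σ_castSucc_δ_succ_apply hij, hy, σ_δ_castSucc_apply]
  · rintro ⟨y, rfl⟩
    exact ⟨X.δ i y, δ_succ_δ_apply h y⟩

lemma δ_succ_mem_range_δ_castSucc_iff {i j : Fin (k + 2)} (h : j ≤ i) {x : X ^⦋k + 1⦌} :
    X.δ i.succ x ∈ Set.range (X.δ j.castSucc) ↔ x ∈ Set.range (X.δ j) := by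
  constructor
  · rintro ⟨y, hy⟩
    rcases h.eq_or_lt with rfl | hji
    · obtain rfl := eq_of_δ_castSucc_eq_δ_succ hy
      exact mem_range_δ_of_δ_castSucc_eq_δ_succ hy
    · obtain ⟨i, rfl⟩ := Fin.exists_succ_eq.mpr (Fin.ne_zero_of_lt hji)
      refine ⟨X.σ i y, ?_⟩
      rw [← σ_succ_δ_castSucc_apply (Fin.le_castSucc_iff.mpr hji), hy, σ_δ_succ_apply]
  · rintro ⟨y, rfl⟩
    exact ⟨X.δ i y, (δ_succ_δ_apply h y).symm⟩

lemma δ_mem_range_δ_succAbove_iff (i : Fin (k + 3)) (j : Fin (k + 2)) {x : X ^⦋k + 1⦌} :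
    X.δ i x ∈ Set.range (X.δ (i.succAbove j)) ↔ x ∈ Set.range (X.δ j) := by
  rcases lt_or_ge j.castSucc i with hji | hij
  · obtain ⟨i, rfl⟩ := Fin.exists_succ_eq.mpr (Fin.ne_zero_of_lt hji)
    rw [Fin.succAbove_of_castSucc_lt _ _ hji,
      δ_succ_mem_range_δ_castSucc_iff (Fin.castSucc_lt_succ_iff.mp hji)]
  · obtain ⟨i, rfl⟩ := Fin.exists_castSucc_eq.mpr
      (Fin.ne_last_of_lt (hij.trans_lt j.castSucc_lt_last))
    rw [Fin.succAbove_of_le_castSucc _ _ hij,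
      δ_castSucc_mem_range_δ_succ_iff (Fin.castSucc_le_castSucc_iff.mp hij)]

/-- The number of leading cofaces of `x`: the largest `n` such that `x` lies in the images of
`d^0, …, d^{n-1}`. It is encoded as the least natural number that is not the index of a coface map
with image containing `x`, so it is `k + 2` if `x` lies in the image of every coface map. -/
noncomputable def leadingCofaces (x : X ^⦋k + 1⦌) : ℕ :=
  sInf {n | ∀ i : Fin (k + 2), (i : ℕ) = n → x ∉ Set.range (X.δ i)}

lemma leadingCofaces_le (x : X ^⦋k + 1⦌) : leadingCofaces x ≤ k + 2 :=
  Nat.sInf_le fun i hi => absurd hi i.isLt.ne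

lemma notMem_range_δ_of_eq_leadingCofaces {x : X ^⦋k + 1⦌} {i : Fin (k + 2)}
    (hi : (i : ℕ) = leadingCofaces x) : x ∉ Set.range (X.δ i) :=
  Nat.sInf_mem (s := {n | ∀ i : Fin (k + 2), (i : ℕ) = n → x ∉ Set.range (X.δ i)})
    ⟨k + 2, fun i hi => absurd hi i.isLt.ne⟩ i hi

lemma mem_range_δ_of_lt_leadingCofaces {x : X ^⦋k + 1⦌} {i : Fin (k + 2)}
    (hi : i < leadingCofaces x) : x ∈ Set.range (X.δ i) := by
  by_contra hx
  exact Nat.notMem_of_lt_sInf hi fun j hj => Fin.ext hj ▸ hx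

lemma leadingCofaces_eq {x : X ^⦋k + 1⦌} {n : ℕ} (hn : n ≤ k + 2)
    (hlt : ∀ i : Fin (k + 2), i < n → x ∈ Set.range (X.δ i))
    (heq : ∀ i : Fin (k + 2), (i : ℕ) = n → x ∉ Set.range (X.δ i)) : leadingCofaces x = n := by
  have hle : leadingCofaces x ≤ n := Nat.sInf_le heq
  refine hle.antisymm (le_of_not_gt fun hlt' => ?_)
  let i : Fin (k + 2) := ⟨leadingCofaces x, hlt'.trans_le hn⟩
  exact notMem_range_δ_of_eq_leadingCofaces (i := i) rfl (hlt i hlt')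

lemma leadingCofaces_δ_of_le {x : X ^⦋k + 1⦌} {i : Fin (k + 3)} (hi : i ≤ leadingCofaces x) :
    leadingCofaces (X.δ i x) = leadingCofaces x + 1 := by
  refine leadingCofaces_eq (by simpa using leadingCofaces_le x) (fun j hj => ?_) (fun j hj => ?_)
  all_goals obtain rfl | ⟨j, rfl⟩ := Fin.eq_self_or_eq_succAbove i j
  · exact Set.mem_range_self x
  · rw [δ_mem_range_δ_succAbove_iff]
    refine mem_range_δ_of_lt_leadingCofaces ?_
    grind [Fin.succAbove]
  · omega
  · rw [δ_mem_range_δ_succAbove_iff]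
    refine notMem_range_δ_of_eq_leadingCofaces ?_
    grind [Fin.succAbove]

lemma leadingCofaces_δ_of_lt {x : X ^⦋k + 1⦌} {i : Fin (k + 3)} (hi : leadingCofaces x < i) :
    leadingCofaces (X.δ i x) = leadingCofaces x := by
  refine leadingCofaces_eq ((leadingCofaces_le x).trans (by omega)) (fun j hj => ?_)
    (fun j hj => ?_)
  all_goals
    obtain rfl | ⟨j, rfl⟩ := Fin.eq_self_or_eq_succAbove i j
    · omega
    rw [δ_mem_range_δ_succAbove_iff]
  · refine mem_range_δ_of_lt_leadingCofaces ?_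
    grind [Fin.succAbove]
  · refine notMem_range_δ_of_eq_leadingCofaces ?_
    grind [Fin.succAbove]

lemma δ_eq_δ_zero_of_le_leadingCofaces {x : X ^⦋k + 1⦌} {i : Fin (k + 3)}
    (hi : i ≤ leadingCofaces x) : X.δ i x = X.δ 0 x := by
  induction i using Fin.induction with
  | zero => rfl
  | succ i ih =>
    rw [← ih (Nat.le_of_lt hi)]
    obtain ⟨y, rfl⟩ := mem_range_δ_of_lt_leadingCofaces hi
    exact δ_succ_δ_apply le_rfl y

lemma δ_σ_zero_of_lt_leadingCofaces {x : X ^⦋k + 1⦌} {i : Fin (k + 2)}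
    (hi : i < leadingCofaces x) : X.δ i (X.σ 0 x) = x := by
  induction i using Fin.induction with
  | zero =>
    obtain ⟨y, rfl⟩ := mem_range_δ_of_lt_leadingCofaces hi
    exact congrArg (X.δ 0) (σ_δ_castSucc_apply 0 y)
  | succ i ih =>
    obtain ⟨y, hy⟩ := mem_range_δ_of_lt_leadingCofaces hi
    have hσ : X.σ 0 x = y :=
      eq_of_δ_castSucc_eq_δ_succ ((ih (Nat.lt_of_succ_lt hi)).trans hy.symm)
    rw [hσ, hy]

section Differential

variable (R : Type w) [Ring R] (X) (M : Type v) [AddCommGroup M] [Module R M]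

/-- The differential of the complex `C(X,M)`, with `X` and `M` in arbitrary universes and `M` a
module over an arbitrary ring `R`; over `ℤ` it unfolds to `cosimpDiff`. -/
noncomputable def cofaceDiff (q : ℕ) : (X ^⦋q⦌ →₀ M) →ₗ[R] (X ^⦋q + 1⦌ →₀ M) :=
  ∑ i : Fin (q + 2), ((-1 : ℤ) ^ (i : ℕ)) • Finsupp.lmapDomain M R (X.δ i)

lemma cofaceDiff_single (q : ℕ) (x : X ^⦋q⦌) (m : M) :
    cofaceDiff X R M q (Finsupp.single x m) =
      ∑ i : Fin (q + 2), ((-1 : ℤ) ^ (i : ℕ)) • Finsupp.single (X.δ i x) m := by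
  simp [cofaceDiff, LinearMap.sum_apply, Finsupp.mapDomain_single]

/-- The functor `S ↦ (S →₀ M)`, the model of `S ↦ ℤS ⊗ M` used for `C(X,M)`. -/
noncomputable def finsuppFunctor : Type u ⥤ ModuleCat.{max u v} R where
  obj S := ModuleCat.of R (S →₀ M)
  map f := ModuleCat.ofHom (Finsupp.lmapDomain M R f)
  map_id S := by
    ext1
    exact Finsupp.lmapDomain_id M R
  map_comp f g := by
    ext1
    exact Finsupp.lmapDomain_comp M R f g

/-- The cosimplicial module `q ↦ (X^q →₀ M)`, whose alternating coface map complex is `C(X,M)`. -/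
noncomputable def finsuppModule : CosimplicialObject (ModuleCat.{max u v} R) :=
  ((CosimplicialObject.whiskering _ _).obj (finsuppFunctor R M)).obj X

lemma cofaceDiff_eq_objD_hom (q : ℕ) : cofaceDiff X R M q =
    (AlgebraicTopology.AlternatingCofaceMapComplex.objD (finsuppModule X R M) q).hom := by
  simp only [AlgebraicTopology.AlternatingCofaceMapComplex.objD, ModuleCat.hom_sum,
    ModuleCat.hom_zsmul]
  rfl

lemma cofaceDiff_comp_cofaceDiff (q : ℕ) :
    cofaceDiff X R M (q + 1) ∘ₗ cofaceDiff X R M q = 0 := by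
  rw [cofaceDiff_eq_objD_hom, cofaceDiff_eq_objD_hom]
  exact congrArg ModuleCat.Hom.hom
    (AlgebraicTopology.AlternatingCofaceMapComplex.d_squared (finsuppModule X R M) q)

end Differential

section Homotopy

variable (R : Type w) [Ring R] (X) (M : Type v) [AddCommGroup M] [Module R M]

open Classical in
/-- The contracting homotopy of `C(X,M)` in positive cosimplicial degrees: it sends `x` to
`s^0 x` when the number of leading cofaces of `x` is odd, and to `0` otherwise. -/
noncomputable def homotopy (k : ℕ) : (X ^⦋k + 1⦌ →₀ M) →ₗ[R] (X ^⦋k⦌ →₀ M) :=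
  Finsupp.lsum ℕ fun x => if Odd (leadingCofaces x) then Finsupp.lsingle (X.σ 0 x) else 0

variable {X} {M}

lemma homotopy_single_of_odd {x : X ^⦋k + 1⦌} (hx : Odd (leadingCofaces x)) (m : M) :
    homotopy X R M k (Finsupp.single x m) = Finsupp.single (X.σ 0 x) m := by
  rw [homotopy, Finsupp.lsum_single, if_pos hx, Finsupp.lsingle_apply]

lemma homotopy_single_of_even {x : X ^⦋k + 1⦌} (hx : Even (leadingCofaces x)) (m : M) :
    homotopy X R M k (Finsupp.single x m) = 0 := by
  rw [homotopy, Finsupp.lsum_single, if_neg (Nat.not_odd_iff_even.mpr hx), LinearMap.zero_apply]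

lemma homotopy_cofaceDiff_single_of_even {x : X ^⦋k + 1⦌} (hx : Even (leadingCofaces x)) (m : M) :
    homotopy X R M (k + 1) (cofaceDiff X R M (k + 1) (Finsupp.single x m)) =
      Finsupp.single x m := by
  simp only [cofaceDiff_single, map_sum, map_zsmul]
  refine sum_neg_one_pow_smul_of_odd (Nat.succ_le_succ (leadingCofaces_le x)) hx.add_one
    (fun i hi => ?_) (fun i hi => ?_)
  · have hle : i ≤ leadingCofaces x := Nat.le_of_lt_succ hi
    have hodd : Odd (leadingCofaces (X.δ i x)) := leadingCofaces_δ_of_le hle ▸ hx.add_one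
    rw [homotopy_single_of_odd R hodd, δ_eq_δ_zero_of_le_leadingCofaces hle]
    exact congrArg (Finsupp.single · m) (σ_δ_castSucc_apply 0 x)
  · exact homotopy_single_of_even R (leadingCofaces_δ_of_lt hi ▸ hx) m

lemma cofaceDiff_homotopy_add_homotopy_cofaceDiff_single_of_odd {x : X ^⦋k + 1⦌}
    (hx : Odd (leadingCofaces x)) (m : M) :
    cofaceDiff X R M k (homotopy X R M k (Finsupp.single x m)) +
      homotopy X R M (k + 1) (cofaceDiff X R M (k + 1) (Finsupp.single x m)) =
        Finsupp.single x m := by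
  have hzero {i : Fin (k + 3)} (hi : i ≤ leadingCofaces x) :
      homotopy X R M (k + 1) (Finsupp.single (X.δ i x) m) = 0 :=
    homotopy_single_of_even R (leadingCofaces_δ_of_le hi ▸ hx.add_one) m
  have hcancel {i : Fin (k + 2)} (hi : leadingCofaces x ≤ i) :
      homotopy X R M (k + 1) (Finsupp.single (X.δ i.succ x) m) =
        Finsupp.single (X.δ i (X.σ 0 x)) m := by
    have hodd : Odd (leadingCofaces (X.δ i.succ x)) :=
      leadingCofaces_δ_of_lt (i := i.succ) (Nat.lt_succ_of_le hi) ▸ hx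
    rw [homotopy_single_of_odd R hodd]
    exact congrArg (Finsupp.single · m) (σ_castSucc_δ_succ_apply (j := 0) (hx.pos.trans_le hi) x)
  rw [homotopy_single_of_odd R hx, cofaceDiff_single, cofaceDiff_single, map_sum,
    Fin.sum_univ_succ (n := k + 2), map_zsmul, hzero (Nat.zero_le _), smul_zero, zero_add,
    ← Finset.sum_add_distrib]
  simp only [Fin.val_succ, pow_succ, mul_neg_one, neg_smul, map_neg, map_zsmul, ← sub_eq_add_neg,
    ← smul_sub]
  refine sum_neg_one_pow_smul_of_odd (leadingCofaces_le x) hx (fun i hi => ?_) (fun i hi => ?_)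
  · rw [hzero (i := i.succ) hi, sub_zero, δ_σ_zero_of_lt_leadingCofaces hi]
  · rw [hcancel hi, sub_self]

lemma cofaceDiff_homotopy_add_homotopy_cofaceDiff (f : X ^⦋k + 1⦌ →₀ M) :
    cofaceDiff X R M k (homotopy X R M k f) +
      homotopy X R M (k + 1) (cofaceDiff X R M (k + 1) f) = f := by
  induction f using Finsupp.induction_linear with
  | zero => simp only [map_zero, add_zero]
  | add f g hf hg => rw [map_add, map_add, map_add, map_add, add_add_add_comm, hf, hg]
  | single x m =>
    rcases Nat.even_or_odd (leadingCofaces x) with hx | hx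
    · rw [homotopy_single_of_even R hx, map_zero, zero_add, homotopy_cofaceDiff_single_of_even R hx]
    · exact cofaceDiff_homotopy_add_homotopy_cofaceDiff_single_of_odd R hx m

end Homotopy

section Homology

variable (R : Type w) [Ring R] (X) (M : Type v) [AddCommGroup M] [Module R M]

lemma ker_cofaceDiff_succ (q : ℕ) :
    LinearMap.ker (cofaceDiff X R M (q + 1)) = LinearMap.range (cofaceDiff X R M q) := by
  refine le_antisymm (fun f hf => ⟨homotopy X R M q f, ?_⟩)
    (LinearMap.range_le_ker_iff.mpr (cofaceDiff_comp_cofaceDiff X R M q))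
  simpa only [LinearMap.mem_ker.mp hf, map_zero, add_zero] using
    cofaceDiff_homotopy_add_homotopy_cofaceDiff R f

lemma cofaceDiff_zero_apply (f : X ^⦋0⦌ →₀ M) :
    cofaceDiff X R M 0 f = Finsupp.mapDomain (X.δ 0) f - Finsupp.mapDomain (X.δ 1) f := by
  simp [cofaceDiff, Fin.sum_univ_two, sub_eq_add_neg]

lemma ker_cofaceDiff_zero :
    LinearMap.ker (cofaceDiff X R M 0) = Finsupp.supported M R {x | X.δ 0 x = X.δ 1 x} := by
  have hδ₀ : Function.Injective (X.δ (n := 0) 0) :=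
    Function.LeftInverse.injective (σ_δ_castSucc_apply (0 : Fin 1))
  ext f
  rw [LinearMap.mem_ker, cofaceDiff_zero_apply, sub_eq_zero, Finsupp.mem_supported]
  refine ⟨fun hf x hx => ?_, fun hf => Finsupp.mapDomain_congr fun x hx => hf hx⟩
  by_contra hne
  have hrange : X.δ 0 x ∉ Set.range (X.δ (n := 0) 1) := by
    rintro ⟨y, hy⟩
    obtain rfl : x = y := eq_of_δ_castSucc_eq_δ_succ (i := 0) hy.symm
    exact hne hy.symm
  refine Finsupp.mem_support_iff.mp hx ?_
  rw [← Finsupp.mapDomain_apply hδ₀ f x, hf, Finsupp.mapDomain_of_notMem_range _ _ hrange]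

end Homology

end CosimplicialSet

open CosimplicialSet in
theorem cosimplicial_chainComplex_homology_general (X : CosimplicialObject (Type u))
    (R : Type w) [Ring R] (M : Type v) [AddCommGroup M] [Module R M] :
    (∀ q : ℕ, LinearMap.ker (cofaceDiff X R M (q + 1)) = LinearMap.range (cofaceDiff X R M q)) ∧
      Nonempty (LinearMap.ker (cofaceDiff X R M 0) ≃ₗ[R]
        ({x : X.obj (SimplexCategory.mk 0) // X.δ 0 x = X.δ 1 x} →₀ M)) :=
  ⟨ker_cofaceDiff_succ X R M,
    ⟨(LinearEquiv.ofEq _ _ (ker_cofaceDiff_zero X R M)).trans (Finsupp.supportedEquivFinsupp _)⟩⟩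

/-- The homology of `C(X,M)` vanishes in all degrees `-q` with `q ≥ 1` (exactness), and
in degree `0` it is isomorphic to the direct sum `⊕ M` over the set of
`x ∈ X^0` with `d^0 x = d^1 x` (homology in degree `0` is the kernel of the first
differential, since nothing maps into degree `0`). -/
theorem cosimplicial_chainComplex_homology (X : CosimplicialObject (Type)) (M : Type)
    [AddCommGroup M] :
    (∀ q : ℕ,
        LinearMap.ker (cosimpDiff X M (q + 1)) = LinearMap.range (cosimpDiff X M q)) ∧
      Nonempty ((LinearMap.ker (cosimpDiff X M 0)) ≃ₗ[ℤ]
        ({x : X.obj (SimplexCategory.mk 0) // X.δ 0 x = X.δ 1 x} →₀ M)) :=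
  cosimplicial_chainComplex_homology_general X ℤ M
end

section
/- For any oriented 1-manifold X without boundary, the sets K(q+1, X) = π₀ Conf(q+1, X) of components of configuration spaces of q+1 ordered points in X form a cosimplicial set, with coface maps given by doubling a point (to its right for d^i, 0 ≤ i ≤ q, and doubling p_0 to its left for d^{q+1}) and codegeneracies given by forgetting a point; these maps satisfy the cosimplicial identities d^j d^i = d^i d^{j−1} for i<j, s^j d^i = d^i s^{j−1} for i<j, s^j d^j = id = s^j d^{j+1}, s^j d^i = d^{i−1} s^j for i>j+1, and s^j s^i = s^i s^{j+1} for i ≤ j. -/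
/-!
STATEMENT 4: For any oriented 1-manifold `X` without boundary (modelled as a disjoint
union of `b` oriented circles and `c` oriented open intervals), the sets
`K(q+1, X) = π₀ Conf(q+1, X)` of connected components of configuration spaces of `q+1`
ordered points in `X` form a cosimplicial set: there are coface maps given by doubling a
point (inserting a new point immediately to the right of `p_i` for `d^i`, `0 ≤ i ≤ q`,
and immediately to the left of `p_0` for `d^{q+1}`) and codegeneracies given by
forgetting a point, and these maps satisfy the cosimplicial identities.
-/

open Function

/-- An oriented 1-manifold without boundary: `b` oriented circles and `c` oriented open
intervals (lines). -/
abbrev OneMfld (b c : ℕ) : Type := (Fin b × Real.Angle) ⊕ (Fin c × ℝ)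

/-- The configuration space of `q` ordered distinct points in `X`. -/
abbrev Config (b c q : ℕ) : Type := {p : Fin q → OneMfld b c // Function.Injective p}

/-- `K(q, X) = π₀ Conf(q, X)`, the set of connected components of the configuration
space. -/
abbrev Kconf (b c q : ℕ) : Type := ConnectedComponents (Config b c q)

/-- `v` lies strictly between `u` and `w` in the positive direction: all three points lie
in the same component, and `v` is strictly between `u` and `w` for the circular order of
that circle, resp. the linear order of that line. -/
def SBtwn {b c : ℕ} : OneMfld b c → OneMfld b c → OneMfld b c → Prop
  | .inl (k, u), .inl (k', v), .inl (k'', w) => k = k' ∧ k' = k'' ∧ sbtw u v w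
  | .inr (k, u), .inr (k', v), .inr (k'', w) => k = k' ∧ k' = k'' ∧ u < v ∧ v < w
  | _, _, _ => False

/-- `x` is immediately after `u` in the positive (orientation) direction, relative to the
points of the configuration `S`: `x ≠ u`, both lie in the same component (and `u < x` if
that component is a line), and no point of `S` lies strictly between `u` and `x`. -/
def ImmAfter {b c q : ℕ} (S : Fin q → OneMfld b c) (u x : OneMfld b c) : Prop :=
  x ≠ u ∧ (∀ j, ¬ SBtwn u (S j) x) ∧
    (match u, x with
      | .inl (k, _), .inl (k', _) => k = k'
      | .inr (k, a), .inr (k', a') => k = k' ∧ a < a'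
      | _, _ => False)

/-!
A map of noncommutative sets (a map with a total order on each fibre) acts contravariantly on the
components of configuration spaces: replace every point of a configuration by its fibre, spread
along the orientation over a small distance in the order of the fibre. The admissible small
displacements form a convex set, so the resulting component does not depend on them, and a
displacement for a composite is obtained by spreading twice, the second time at a much smaller
scale; hence the action is functorial. The cofaces and the codegeneracies are the actions of maps
between finite sets, where the cosimplicial identities are elementary.
-/

/-- A map of noncommutative sets: a map of sets together with a strict total order on each of its
fibres. The orders on the fibres are encoded as one relation on the source, which never relates
points of different fibres. -/
structure NCMap (S T : Type*) where
  toFun : S → T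
  lt : S → S → Prop
  map_eq_of_lt {a b : S} : lt a b → toFun a = toFun b
  lt_irrefl (a : S) : ¬ lt a a
  lt_trans {a b c : S} : lt a b → lt b c → lt a c
  lt_or_gt {a b : S} : toFun a = toFun b → a ≠ b → lt a b ∨ lt b a

namespace NCMap

variable {S T U : Type*}

instance : CoeFun (NCMap S T) fun _ => S → T := ⟨toFun⟩

@[ext]
theorem ext {f g : NCMap S T} (hfun : ∀ a, f a = g a) (hlt : ∀ a b, f.lt a b ↔ g.lt a b) :
    f = g := by
  obtain ⟨f, ltf⟩ := f
  obtain ⟨g, ltg⟩ := g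
  obtain rfl : f = g := funext hfun
  obtain rfl : ltf = ltg := funext₂ fun a b => propext (hlt a b)
  rfl

/-- Composition of maps of noncommutative sets: the fibres are ordered lexicographically. -/
def comp (f : NCMap T U) (g : NCMap S T) : NCMap S U where
  toFun := f ∘ g
  lt a b := f.lt (g a) (g b) ∨ g.lt a b
  map_eq_of_lt := by
    rintro a b (h | h)
    · exact f.map_eq_of_lt h
    · exact congrArg f (g.map_eq_of_lt h)
  lt_irrefl a h := h.elim (f.lt_irrefl _) (g.lt_irrefl _)
  lt_trans := by
    rintro a b c (hab | hab) (hbc | hbc)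
    · exact .inl (f.lt_trans hab hbc)
    · exact .inl (g.map_eq_of_lt hbc ▸ hab)
    · exact .inl (g.map_eq_of_lt hab ▸ hbc)
    · exact .inr (g.lt_trans hab hbc)
  lt_or_gt {a b} h hab := by
    by_cases hg : g a = g b
    · exact (g.lt_or_gt hg hab).imp .inr .inr
    · exact (f.lt_or_gt h hg).imp .inl .inl

theorem comp_apply (f : NCMap T U) (g : NCMap S T) (a : S) : f.comp g a = f (g a) := rfl

theorem comp_lt_iff {f : NCMap T U} {g : NCMap S T} {a b : S} :
    (f.comp g).lt a b ↔ f.lt (g a) (g b) ∨ g.lt a b := Iff.rfl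

/-- An injective map, as a map of noncommutative sets: its fibres carry a unique order. -/
def ofInjective (f : S → T) (hf : Injective f) : NCMap S T where
  toFun := f
  lt _ _ := False
  map_eq_of_lt := False.elim
  lt_irrefl _ := id
  lt_trans h := h.elim
  lt_or_gt h hab := absurd (hf h) hab

theorem ofInjective_apply (f : S → T) (hf : Injective f) (a : S) : ofInjective f hf a = f a := rfl

theorem ofInjective_not_lt (f : S → T) (hf : Injective f) (a b : S) :
    ¬ (ofInjective f hf).lt a b := id

section CosimplicialIdentities

variable {q : ℕ}

/-- The surjection underlying the coface map `d^i`: it identifies `i` with its cyclic successor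
`i + 1` in `Fin (q + 2)`, which comes after `i` in their common fibre. For `i = q + 1` the last
point is sent to `0` and comes before it. -/
def collapse (i : Fin (q + 2)) : NCMap (Fin (q + 2)) (Fin (q + 1)) where
  toFun a := ⟨if i < a then a - 1 else if (a : ℕ) = q + 1 then 0 else a, by grind⟩
  lt a b := a = i ∧ b = i + 1
  map_eq_of_lt := by simp only [Fin.ext_iff, Fin.lt_def, Fin.val_add_one]; grind
  lt_irrefl := by simp only [Fin.ext_iff, Fin.val_add_one]; grind
  lt_trans := by simp only [Fin.ext_iff, Fin.val_add_one]; grind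
  lt_or_gt := by simp only [Fin.ext_iff, Fin.lt_def, Fin.val_add_one]; grind

theorem val_collapse (i a : Fin (q + 2)) :
    (collapse i a : ℕ) =
      if (i : ℕ) < a then (a : ℕ) - 1 else if (a : ℕ) = q + 1 then 0 else (a : ℕ) := rfl

theorem collapse_lt_iff {i a b : Fin (q + 2)} :
    (collapse i).lt a b ↔ (a : ℕ) = i ∧ (b : ℕ) = if (i : ℕ) = q + 1 then 0 else (i : ℕ) + 1 := by
  simp only [collapse, Fin.ext_iff, Fin.val_add_one, Fin.val_last]

/-- The injection underlying the codegeneracy `s^j`: it misses the index `j + 1`. -/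
def skip (j : Fin (q + 1)) : NCMap (Fin (q + 1)) (Fin (q + 2)) :=
  ofInjective j.succ.succAbove Fin.succAbove_right_injective

theorem val_skip (j a : Fin (q + 1)) : (skip j a : ℕ) = if a ≤ j then (a : ℕ) else a + 1 := by
  simp only [skip, ofInjective_apply, Fin.succAbove, Fin.castSucc_lt_succ_iff]
  split_ifs <;> rfl

theorem skip_not_lt (j a b : Fin (q + 1)) : ¬ (skip j).lt a b :=
  ofInjective_not_lt _ _ a b

theorem collapse_comp_collapse {i j : Fin (q + 2)} (hij : i ≤ j) :
    (collapse i).comp (collapse j.succ) = (collapse j).comp (collapse i.castSucc) := by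
  ext <;> grind (splits := 20) [comp_apply, comp_lt_iff, val_collapse, collapse_lt_iff]

theorem collapse_castSucc_comp_skip_succ {i : Fin (q + 2)} {j : Fin (q + 1)}
    (hij : i ≤ j.castSucc) :
    (collapse i.castSucc).comp (skip j.succ) = (skip j).comp (collapse i) := by
  ext <;> grind [comp_apply, comp_lt_iff, val_collapse, collapse_lt_iff, val_skip, skip_not_lt]

theorem collapse_succ_comp_skip_castSucc {i : Fin (q + 2)} {j : Fin (q + 1)}
    (hij : j.castSucc < i) :
    (collapse i.succ).comp (skip j.castSucc) = (skip j).comp (collapse i) := by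
  ext <;> grind [comp_apply, comp_lt_iff, val_collapse, collapse_lt_iff, val_skip, skip_not_lt]

theorem collapse_castSucc_comp_skip (j : Fin (q + 1)) :
    (collapse j.castSucc).comp (skip j) = ofInjective id injective_id := by
  ext <;> grind [comp_apply, comp_lt_iff, val_collapse, collapse_lt_iff, val_skip, skip_not_lt,
    ofInjective_apply, ofInjective_not_lt, id_eq]

theorem collapse_succ_comp_skip (j : Fin (q + 1)) :
    (collapse j.succ).comp (skip j) = ofInjective id injective_id := by
  ext <;> grind [comp_apply, comp_lt_iff, val_collapse, collapse_lt_iff, val_skip, skip_not_lt,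
    ofInjective_apply, ofInjective_not_lt, id_eq]

theorem skip_comp_skip {i j : Fin (q + 1)} (hij : i ≤ j) :
    (skip i.castSucc).comp (skip j) = (skip j.succ).comp (skip i) := by
  ext <;> grind [comp_apply, comp_lt_iff, val_skip, skip_not_lt]

end CosimplicialIdentities

/-- Real functions on the source that realise the orders on the fibres of a map of noncommutative
sets. -/
def Increasing (f : NCMap S T) (ρ : S → ℝ) : Prop :=
  ∀ ⦃a b⦄, f.lt a b → ρ a < ρ b

theorem Increasing.smul {f : NCMap S T} {ρ : S → ℝ} (hρ : f.Increasing ρ) {u : ℝ} (hu : 0 < u) :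
    f.Increasing (u • ρ) :=
  fun _ _ h => mul_lt_mul_of_pos_left (hρ h) hu

theorem convex_setOf_increasing (f : NCMap S T) : Convex ℝ {ρ | f.Increasing ρ} := by
  intro ρ hρ σ hσ u v hu hv huv a b hab
  have hpos : 0 < u • (ρ b - ρ a) + v • (σ b - σ a) :=
    convex_Ioi (0 : ℝ) (sub_pos.2 (hρ hab)) (sub_pos.2 (hσ hab)) hu hv huv
  simp only [smul_eq_mul, Pi.add_apply, Pi.smul_apply] at hpos ⊢
  linarith

/-- The number of predecessors in the fibre, divided by the size of the source: a canonical choice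
of an increasing function with values in `[0, 1)`. -/
noncomputable def height (f : NCMap S T) (s : S) : ℝ :=
  {a | f.lt a s}.ncard / Nat.card S

section Finite

variable [Finite S]

theorem increasing_height (f : NCMap S T) : f.Increasing f.height := by
  intro a b hab
  have : Nonempty S := ⟨a⟩
  have hss : {s | f.lt s a} ⊂ {s | f.lt s b} :=
    ⟨fun _ hs => f.lt_trans hs hab, fun h => f.lt_irrefl a (h hab)⟩
  exact div_lt_div_of_pos_right (Nat.cast_lt.2 (Set.ncard_lt_ncard hss))
    (Nat.cast_pos.2 Nat.card_pos)

theorem abs_height_lt_one (f : NCMap S T) (s : S) : |f.height s| < 1 := by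
  have : Nonempty S := ⟨s⟩
  have hlt : {a | f.lt a s}.ncard < Nat.card S :=
    Set.ncard_lt_card ((Set.ne_univ_iff_exists_notMem _).2 ⟨s, f.lt_irrefl s⟩)
  rw [height, abs_of_nonneg (by positivity), div_lt_one (Nat.cast_pos.2 Nat.card_pos)]
  exact Nat.cast_lt.2 hlt

theorem abs_smul_height_lt (f : NCMap S T) {δ : ℝ} (hδ : 0 < δ) (s : S) :
    |(δ • f.height) s| < δ := by
  rw [Pi.smul_apply, smul_eq_mul, abs_mul, abs_of_pos hδ]
  exact mul_lt_of_lt_one_right hδ (f.abs_height_lt_one s)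

open Filter Topology in
theorem eventually_increasing_comp {f : NCMap T U} {g : NCMap S T} {ρ : T → ℝ} {σ : S → ℝ}
    (hρ : f.Increasing ρ) (hσ : g.Increasing σ) :
    ∀ᶠ v in 𝓝[>] (0 : ℝ), (f.comp g).Increasing (ρ ∘ g + v • σ) := by
  refine eventually_all.2 fun a => eventually_all.2 fun b => ?_
  by_cases hf : f.lt (g a) (g b)
  · have hlim (s : S) : Tendsto (fun v : ℝ => ρ (g s) + v * σ s) (𝓝[>] 0) (𝓝 (ρ (g s))) :=
      tendsto_nhdsWithin_of_tendsto_nhds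
        (Continuous.tendsto' (by fun_prop) _ _ (by rw [zero_mul, add_zero]))
    exact ((hlim a).eventually_lt (hlim b) (hρ hf)).mono fun _ h _ => h
  · filter_upwards [self_mem_nhdsWithin] with v hv hab
    have hg : g.lt a b := hab.resolve_left hf
    simpa [g.map_eq_of_lt hg] using mul_lt_mul_of_pos_left (hσ hg) hv

end Finite

end NCMap

open Filter Topology in
theorem eventually_forall_abs_add_smul_le {S : Type*} [Finite S] {ρ : S → ℝ} {δ : ℝ}
    (hρ : ∀ s, |ρ s| < δ) (σ : S → ℝ) : ∀ᶠ v in 𝓝[>] (0 : ℝ), ∀ s, |(ρ + v • σ) s| ≤ δ := by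
  refine eventually_all.2 fun s => ?_
  have hlim : Tendsto (fun v : ℝ => |ρ s + v * σ s|) (𝓝[>] 0) (𝓝 |ρ s|) :=
    tendsto_nhdsWithin_of_tendsto_nhds
      (Continuous.tendsto' (by fun_prop) _ _ (by rw [zero_mul, add_zero]))
  exact hlim.eventually_le_const (hρ s)

theorem mk_eq_mk_of_isPreconnected {Y Z : Type*} [TopologicalSpace Y] [TopologicalSpace Z]
    {P : Y → Prop} {A : Set Z} (hA : IsPreconnected A) {F : Z → Y} (hF : ContinuousOn F A)
    (hP : ∀ z ∈ A, P (F z)) {z w : Z} (hz : z ∈ A) (hw : w ∈ A) :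
    (ConnectedComponents.mk ⟨F z, hP z hz⟩ : ConnectedComponents {y // P y}) =
      ConnectedComponents.mk ⟨F w, hP w hw⟩ := by
  let G : A → {y // P y} := fun z => ⟨F z, hP z z.2⟩
  have hG : Continuous G := (continuousOn_iff_continuous_domRestrict.1 hF).subtype_mk _
  have : PreconnectedSpace A := Subtype.preconnectedSpace hA
  exact ConnectedComponents.coe_eq_coe'.2 <|
    (isPreconnected_range hG).subset_connectedComponent ⟨⟨w, hw⟩, rfl⟩ ⟨⟨z, hz⟩, rfl⟩

/-- The space of configurations in `X` of distinct points labelled by `S`; for `S = Fin q` and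
`X = OneMfld b c` this is `Config b c q`. -/
abbrev Conf (S X : Type*) : Type _ := {p : S → X // Injective p}

/-- The components of the space of configurations labelled by `S`; for `S = Fin q` and
`X = OneMfld b c` this is `Kconf b c q`. -/
abbrev ConfComponents (S X : Type*) [TopologicalSpace X] : Type _ := ConnectedComponents (Conf S X)

/-- Flows for which the points of a finite configuration have pairwise disjoint, injectively
parametrised trajectories over an interval `[-ε, ε]` that depends continuously on the
configuration. -/
class IsCollisionFree {X : Type*} [TopologicalSpace X] (φ : Flow ℝ X) : Prop where
  exists_time (T : Type) [Finite T] : ∃ ε : Conf T X → ℝ, Continuous ε ∧ (∀ p, 0 < ε p) ∧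
    ∀ (p : Conf T X) (t t' : ℝ) (a b : T), |t| ≤ ε p → |t'| ≤ ε p →
      φ t (p.1 a) = φ t' (p.1 b) → t = t' ∧ a = b

theorem exists_continuous_pos_le_dist (T X : Type*) [Finite T] [MetricSpace X] :
    ∃ δ : Conf T X → ℝ, Continuous δ ∧ (∀ p, 0 < δ p) ∧ (∀ p, δ p ≤ 1) ∧
      ∀ (p : Conf T X) (a b : T), a ≠ b → δ p ≤ dist (p.1 a) (p.1 b) := by
  classical
  have := Fintype.ofFinite T
  let gap (p : Conf T X) (o : Option {a : T × T // a.1 ≠ a.2}) : ℝ :=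
    o.elim 1 fun a => dist (p.1 a.1.1) (p.1 a.1.2)
  have hle (p o) : Finset.univ.inf' Finset.univ_nonempty (gap p) ≤ gap p o :=
    Finset.inf'_le (gap p) (Finset.mem_univ o)
  refine ⟨fun p => Finset.univ.inf' Finset.univ_nonempty (gap p), ?_, fun p => ?_,
    fun p => hle p none, fun p a b hab => hle p (some ⟨(a, b), hab⟩)⟩
  · refine Continuous.finset_inf'_apply _ fun o _ => ?_
    rcases o with _ | a
    · exact continuous_const
    · have hcoord (a : T) : Continuous fun p : Conf T X => p.1 a :=
        (continuous_apply a).comp continuous_subtype_val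
      exact (hcoord _).dist (hcoord _)
  · refine (Finset.lt_inf'_iff _).2 fun o _ => ?_
    rcases o with _ | a
    · exact one_pos
    · exact dist_pos.2 (p.2.ne a.2)

theorem isCollisionFree_of_dist_le {X : Type*} [MetricSpace X] {φ : Flow ℝ X}
    (hdist : ∀ t x, dist (φ t x) x ≤ |t|) (hfree : ∀ t x, |t| ≤ 1 → φ t x = x → t = 0) :
    IsCollisionFree φ where
  exists_time T _ := by
    obtain ⟨δ, hδ, hpos, hone, hle⟩ := exists_continuous_pos_le_dist T X
    refine ⟨fun p => δ p / 3, hδ.div_const 3, fun p => div_pos (hpos p) three_pos,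
      fun p t t' a b ht ht' h => ?_⟩
    obtain rfl : a = b := by
      by_contra hab
      have hdist' : dist (p.1 a) (p.1 b) ≤ |t| + |t'| :=
        calc dist (p.1 a) (p.1 b)
            ≤ dist (p.1 a) (φ t (p.1 a)) + dist (φ t' (p.1 b)) (p.1 b) := h ▸ dist_triangle _ _ _
          _ ≤ |t| + |t'| := add_le_add ((dist_comm _ _).trans_le (hdist _ _)) (hdist _ _)
      linarith [hle p a b hab, hpos p]
    have hfix : φ (-t' + t) (p.1 a) = p.1 a := by
      rw [φ.map_add, h, ← φ.map_add, neg_add_cancel, φ.map_zero_apply]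
    have hsmall : |-t' + t| ≤ 1 := by
      linarith [abs_add_le (-t') t, abs_neg t', hone p, hpos p]
    exact ⟨by linarith [hfree _ _ hsmall hfix], rfl⟩

namespace ConfComponents

section Displace

variable {X S T U : Type*} [TopologicalSpace X] (φ : Flow ℝ X)

/-- The family of points obtained from `p ∘ f` by letting the point labelled `s` flow for the
time `ρ s`. -/
def displace (f : S → T) (p : T → X) (ρ : S → ℝ) : S → X :=
  fun s => φ (ρ s) (p (f s))

theorem displace_displace (f : T → U) (g : S → T) (p : U → X) (ρ : T → ℝ) (σ : S → ℝ) :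
    displace φ g (displace φ f p ρ) σ = displace φ (f ∘ g) p (ρ ∘ g + σ) := by
  funext s
  simp only [displace, Function.comp_apply, Pi.add_apply, ← φ.map_add, add_comm]

theorem displace_zero (f : S → T) (p : T → X) : displace φ f p 0 = p ∘ f :=
  funext fun _ => φ.map_zero_apply _

theorem continuous_displace (f : S → T) :
    Continuous fun x : (T → X) × (S → ℝ) => displace φ f x.1 x.2 := by
  unfold displace
  fun_prop

end Displace

variable {X : Type*} [TopologicalSpace X] (φ : Flow ℝ X) [IsCollisionFree φ]
variable {S T U : Type} [Finite T]

/-- A time within which the points of a configuration neither meet nor return, continuous in the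
configuration. -/
noncomputable def safeTime : Conf T X → ℝ :=
  (IsCollisionFree.exists_time (φ := φ) T).choose

theorem continuous_safeTime : Continuous (safeTime φ : Conf T X → ℝ) :=
  (IsCollisionFree.exists_time (φ := φ) T).choose_spec.1

theorem safeTime_pos (p : Conf T X) : 0 < safeTime φ p :=
  (IsCollisionFree.exists_time (φ := φ) T).choose_spec.2.1 p

variable {φ} in
theorem eq_and_eq_of_flow_eq_flow {p : Conf T X} {t t' : ℝ} {a b : T} (ht : |t| ≤ safeTime φ p)
    (ht' : |t'| ≤ safeTime φ p) (h : φ t (p.1 a) = φ t' (p.1 b)) : t = t' ∧ a = b :=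
  (IsCollisionFree.exists_time (φ := φ) T).choose_spec.2.2 p t t' a b ht ht' h

theorem displace_injective {f : NCMap S T} {p : Conf T X} {ρ : S → ℝ} (hρ : f.Increasing ρ)
    (hle : ∀ s, |ρ s| ≤ safeTime φ p) : Injective (displace φ f p.1 ρ) := by
  intro a b h
  obtain ⟨ht, hf⟩ := eq_and_eq_of_flow_eq_flow (hle a) (hle b) h
  by_contra hab
  rcases f.lt_or_gt hf hab with hlt | hlt
  · exact (hρ hlt).ne ht
  · exact (hρ hlt).ne' ht

variable [Finite S]

/-- The configuration labelled by `S` in which every point of `p` is replaced by its fibre under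
`f`, spread along the flow in the order of the fibre. -/
noncomputable def spread (f : NCMap S T) (p : Conf T X) : Conf S X :=
  ⟨displace φ f p.1 (safeTime φ p • f.height),
    displace_injective φ (f.increasing_height.smul (safeTime_pos φ p)) fun s =>
      (f.abs_smul_height_lt (safeTime_pos φ p) s).le⟩

theorem continuous_spread (f : NCMap S T) : Continuous (spread φ f) :=
  ((continuous_displace φ f).comp <| continuous_subtype_val.prodMk <|
    (continuous_safeTime φ).smul continuous_const).subtype_mk _

/-- The contravariant action of maps of noncommutative sets on components of configuration
spaces. -/
noncomputable def pull (f : NCMap S T) : ConfComponents T X → ConfComponents S X :=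
  (continuous_spread φ f).connectedComponentsMap

theorem pull_mk {f : NCMap S T} {p : Conf T X} {ρ : S → ℝ} (hρ : f.Increasing ρ)
    (hle : ∀ s, |ρ s| ≤ safeTime φ p) :
    pull φ f (ConnectedComponents.mk p) =
      ConnectedComponents.mk ⟨displace φ f p.1 ρ, displace_injective φ hρ hle⟩ := by
  set δ := safeTime φ p
  have hδ : 0 < δ := safeTime_pos φ p
  let A : Set (S → ℝ) := {σ | f.Increasing σ} ∩ Set.Icc (fun _ => -δ) (fun _ => δ)
  have hA : IsPreconnected A := (f.convex_setOf_increasing.inter (convex_Icc _ _)).isPreconnected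
  have hmem {σ : S → ℝ} (hσ : f.Increasing σ) (hle : ∀ s, |σ s| ≤ δ) : σ ∈ A :=
    ⟨hσ, fun s => (abs_le.1 (hle s)).1, fun s => (abs_le.1 (hle s)).2⟩
  have hcont : Continuous (displace φ f p.1) := (continuous_displace φ f).comp (.prodMk_right _)
  have hinj (σ : S → ℝ) (hσ : σ ∈ A) : Injective (displace φ f p.1 σ) :=
    displace_injective φ hσ.1 fun s => abs_le.2 ⟨hσ.2.1 s, hσ.2.2 s⟩
  exact mk_eq_mk_of_isPreconnected hA hcont.continuousOn hinj
    (hmem (f.increasing_height.smul hδ) fun s => (f.abs_smul_height_lt hδ s).le) (hmem hρ hle)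

open Topology in
theorem eventually_abs_smul_le_safeTime (σ : S → ℝ) (p : Conf T X) :
    ∀ᶠ v in 𝓝[>] (0 : ℝ), ∀ s, |(v • σ) s| ≤ safeTime φ p := by
  simpa only [zero_add] using eventually_forall_abs_add_smul_le (ρ := 0)
    (fun _ => by simpa using safeTime_pos φ p) σ

theorem pull_pull [Finite U] (f : NCMap T U) (g : NCMap S T) (x : ConfComponents U X) :
    pull φ g (pull φ f x) = pull φ (f.comp g) x := by
  obtain ⟨p, rfl⟩ := ConnectedComponents.surjective_coe x
  have hpos := safeTime_pos φ p
  set ρ : T → ℝ := safeTime φ p • f.height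
  have hρ : f.Increasing ρ := f.increasing_height.smul hpos
  have hρ_lt : ∀ t, |ρ t| < safeTime φ p := f.abs_smul_height_lt hpos
  have hσ := g.increasing_height
  -- At a sufficiently small scale, spreading along `g` does not disturb the order along `f`.
  obtain ⟨v, hv, hv_inc, hv_p, hv_q⟩ := (eventually_mem_nhdsWithin.and <|
    (NCMap.eventually_increasing_comp hρ hσ).and <|
    (eventually_forall_abs_add_smul_le (fun s => hρ_lt (g s)) g.height).and <|
    eventually_abs_smul_le_safeTime φ g.height
      ⟨displace φ f p.1 ρ, displace_injective φ hρ fun t => (hρ_lt t).le⟩).exists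
  rw [pull_mk φ hρ fun t => (hρ_lt t).le, pull_mk φ (hσ.smul hv) hv_q, pull_mk φ hv_inc hv_p]
  congr 2
  exact displace_displace φ f g p.1 ρ (v • g.height)

theorem pull_ofInjective {f : S → T} (hf : Injective f) (p : Conf T X) :
    pull φ (.ofInjective f hf) (ConnectedComponents.mk p) =
      ConnectedComponents.mk ⟨p.1 ∘ f, p.2.comp hf⟩ := by
  have hinc : (NCMap.ofInjective f hf).Increasing 0 := fun _ _ h => False.elim h
  rw [pull_mk φ hinc fun _ => by simpa using (safeTime_pos φ p).le]
  congr 2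
  exact displace_zero φ f p.1

theorem pull_ofInjective_id (x : ConfComponents T X) :
    pull φ (.ofInjective id injective_id) x = x := by
  obtain ⟨p, rfl⟩ := ConnectedComponents.surjective_coe x
  exact pull_ofInjective φ injective_id p

theorem pull_mk_eq_mk {f : NCMap S T} {p : Conf T X} {p' : Conf S X} {ρ : S → ℝ}
    (hρ : f.Increasing ρ) (hp' : displace φ f p.1 ρ = p'.1)
    (hinj : ∀ u ∈ Set.Ioo (0 : ℝ) 1, Injective (displace φ f p.1 (u • ρ))) :
    pull φ f (ConnectedComponents.mk p) = ConnectedComponents.mk p' := by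
  obtain ⟨u, hu_le, hu⟩ :=
    ((eventually_abs_smul_le_safeTime φ ρ p).and (Ioo_mem_nhdsGT one_pos)).exists
  have hcont : Continuous fun u : ℝ => displace φ f p.1 (u • ρ) :=
    (continuous_displace φ f).comp (continuous_const.prodMk (continuous_id.smul continuous_const))
  have hp'_one : displace φ f p.1 ((1 : ℝ) • ρ) = p'.1 := by rw [one_smul, hp']
  have hinj' : ∀ u ∈ Set.Ioc (0 : ℝ) 1, Injective (displace φ f p.1 (u • ρ)) := by
    rintro u ⟨hu, hu'⟩
    rcases hu'.eq_or_lt with rfl | hu'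
    · exact hp'_one ▸ p'.2
    · exact hinj u ⟨hu, hu'⟩
  rw [pull_mk φ (hρ.smul hu.1) hu_le]
  refine (mk_eq_mk_of_isPreconnected isPreconnected_Ioc hcont.continuousOn hinj'
    ⟨hu.1, hu.2.le⟩ (Set.right_mem_Ioc.2 one_pos)).trans ?_
  exact congrArg ConnectedComponents.mk (Subtype.ext hp'_one)

theorem pull_mk_eq_mk_of_single [DecidableEq S] {f : NCMap S T} {p : Conf T X} {p' : Conf S X}
    {k : S} {t : ℝ} (hinc : f.Increasing (Pi.single k t)) (hk : φ t (p.1 (f k)) = p'.1 k)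
    (hp' : ∀ a ≠ k, p.1 (f a) = p'.1 a)
    (hfree : ∀ u ∈ Set.Ioo (0 : ℝ) 1, ∀ a, φ (u * t) (p.1 (f k)) ≠ p'.1 a) :
    pull φ f (ConnectedComponents.mk p) = ConnectedComponents.mk p' := by
  have hupdate (r : ℝ) :
      displace φ f p.1 (Pi.single k r) = update p'.1 k (φ r (p.1 (f k))) := by
    funext a
    by_cases ha : a = k
    · subst ha
      simp [displace]
    · simp [displace, ha, hp' a ha]
  refine pull_mk_eq_mk φ hinc ?_ fun u hu => ?_
  · rw [hupdate, hk, update_eq_self]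
  · rw [← Pi.single_smul, hupdate, smul_eq_mul]
    intro a b
    have := hfree u hu
    by_cases ha : a = k <;> by_cases hb : b = k <;> simp_all [p'.2.eq_iff, eq_comm]

end ConfComponents

namespace OneMfld

variable {b c n : ℕ}

/-- The translation flow in the positive direction, at unit speed on every component. -/
noncomputable def flow : Flow ℝ (OneMfld b c) where
  toFun t := Sum.map (Prod.map id (· + (t : Real.Angle))) (Prod.map id (· + t))
  cont' := by
    rw [← (Homeomorph.prodSumDistrib (X := ℝ) (Y := Fin b × Real.Angle)
      (Z := Fin c × ℝ)).symm.comp_continuous_iff']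
    refine continuous_sum_dom.2 ⟨?_, ?_⟩
    · change Continuous fun z : ℝ × (Fin b × Real.Angle) =>
        (Sum.inl (z.2.1, z.2.2 + (z.1 : Real.Angle)) : OneMfld b c)
      fun_prop
    · change Continuous fun z : ℝ × (Fin c × ℝ) => (Sum.inr (z.2.1, z.2.2 + z.1) : OneMfld b c)
      fun_prop
  map_add' := by
    rintro s t (⟨k, u⟩ | ⟨k, u⟩) <;> simp [add_assoc, add_comm s t]
  map_zero' := by
    rintro (⟨k, u⟩ | ⟨k, u⟩) <;> simp

theorem flow_inl (t : ℝ) (k : Fin b) (u : Real.Angle) :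
    flow t (.inl (k, u) : OneMfld b c) = .inl (k, u + (t : Real.Angle)) := rfl

theorem flow_inr (t : ℝ) (k : Fin c) (u : ℝ) :
    flow t (.inr (k, u) : OneMfld b c) = .inr (k, u + t) := rfl

theorem eq_zero_of_flow_eq_self {t : ℝ} (ht : |t| ≤ 1) {x : OneMfld b c} (h : flow t x = x) :
    t = 0 := by
  rcases x with ⟨k, u⟩ | ⟨k, u⟩
  · have ht_coe : (t : Real.Angle) = 0 := by simpa [flow_inl] using h
    have hpi := Real.pi_gt_three
    have ht_toReal : (t : Real.Angle).toReal = t :=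
      Real.Angle.toReal_coe_eq_self_iff.2 ⟨by linarith [abs_le.1 ht], by linarith [abs_le.1 ht]⟩
    rw [← ht_toReal, ht_coe, Real.Angle.toReal_zero]
  · simpa [flow_inr] using h

instance isCollisionFree_flow : IsCollisionFree (flow : Flow ℝ (OneMfld b c)) := by
  let (m : ℕ) : MetricSpace (Fin m) := TopologicalSpace.metrizableSpaceMetric (Fin m)
  let : MetricSpace (OneMfld b c) := Metric.metricSpaceSum
  refine isCollisionFree_of_dist_le (fun t x => ?_) fun _ _ ht h => eq_zero_of_flow_eq_self ht h
  rcases x with ⟨k, u⟩ | ⟨k, u⟩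
  · change dist (k, u + (t : Real.Angle)) (k, u) ≤ |t|
    rw [dist_prod_same_left, dist_self_add_left]
    exact QuotientAddGroup.norm_mk_le_norm
  · change dist (k, u + t) (k, u) ≤ |t|
    rw [dist_prod_same_left, dist_self_add_left, Real.norm_eq_abs]

theorem sbtw_add_coe {s t : ℝ} (hs : 0 < s) (hst : s < t) (ht : t < 2 * Real.pi)
    (u : Real.Angle) : sbtw u (u + (s : Real.Angle)) (u + (t : Real.Angle)) := by
  induction u using Real.Angle.induction_on with
  | h u =>
  rw [sbtw_iff_not_btw, ← Real.Angle.coe_add, ← Real.Angle.coe_add]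
  have : Fact (0 < 2 * Real.pi) := ⟨Real.two_pi_pos⟩
  have hs_mod : toIcoMod Real.two_pi_pos (u + t) (u + s) = u + s + 2 * Real.pi :=
    (toIcoMod_eq_iff _).2 ⟨⟨by linarith, by linarith⟩, -1, by simp⟩
  have h0_mod : toIocMod Real.two_pi_pos (u + t) u = u + 2 * Real.pi :=
    (toIocMod_eq_iff _).2 ⟨⟨by linarith, by linarith⟩, -1, by simp⟩
  intro h
  have h' := (QuotientAddGroup.btw_coe_iff (p := 2 * Real.pi)).1 h
  rw [hs_mod, h0_mod] at h'
  linarith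

theorem exists_pos_lt_two_pi_add_coe_eq {u x : Real.Angle} (h : x ≠ u) :
    ∃ t : ℝ, 0 < t ∧ t < 2 * Real.pi ∧ u + (t : Real.Angle) = x := by
  have hne : (x - u).toReal ≠ 0 := by simpa [sub_eq_zero] using h
  have hlt := Real.Angle.neg_pi_lt_toReal (x - u)
  have hle := Real.Angle.toReal_le_pi (x - u)
  rcases hne.lt_or_gt with hneg | hpos
  · exact ⟨(x - u).toReal + 2 * Real.pi, by linarith, by linarith, by simp⟩
  · exact ⟨(x - u).toReal, hpos, by linarith, by simp⟩

theorem exists_flow_eq_of_immAfter {S : Fin n → OneMfld b c} {u x : OneMfld b c}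
    (h : ImmAfter S u x) :
    ∃ t : ℝ, 0 < t ∧ flow t u = x ∧ ∀ s, 0 < s → s < t → ∀ j, flow s u ≠ S j := by
  obtain ⟨hne, hS, hux⟩ := h
  rcases u with ⟨k, u⟩ | ⟨k, u⟩ <;> rcases x with ⟨l, x⟩ | ⟨l, x⟩ <;> simp only at hux
  · subst hux
    have hxu : x ≠ u := fun h => hne (by rw [h])
    obtain ⟨t, ht0, ht, rfl⟩ := exists_pos_lt_two_pi_add_coe_eq hxu
    refine ⟨t, ht0, rfl, fun s hs hst j hj => hS j ?_⟩
    rw [← hj]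
    exact ⟨rfl, rfl, sbtw_add_coe hs hst ht u⟩
  · obtain ⟨rfl, hlt⟩ := hux
    refine ⟨x - u, sub_pos.2 hlt, by simp [flow_inr], fun s hs hst j hj => hS j ?_⟩
    rw [← hj]
    exact ⟨rfl, rfl, by linarith, by linarith⟩

open ConfComponents

/-- The coface map `d^i` on components of configuration spaces. -/
noncomputable def coface (q : ℕ) (i : Fin (q + 2)) : Kconf b c (q + 1) → Kconf b c (q + 2) :=
  pull flow (NCMap.collapse i)

/-- The codegeneracy `s^j` on components of configuration spaces. -/
noncomputable def codegeneracy (q : ℕ) (j : Fin (q + 1)) : Kconf b c (q + 2) → Kconf b c (q + 1) :=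
  pull flow (NCMap.skip j)

theorem coface_castSucc_mk {q : ℕ} {i : Fin (q + 1)} {p : Config b c (q + 1)}
    {p' : Config b c (q + 2)} (hp : p'.1 ∘ Fin.succAbove i.succ = p.1)
    (h : ImmAfter p'.1 (p.1 i) (p'.1 i.succ)) :
    coface q i.castSucc (ConnectedComponents.mk p) = ConnectedComponents.mk p' := by
  obtain ⟨t, ht, hflow, hfree⟩ := exists_flow_eq_of_immAfter h
  have hi : NCMap.collapse i.castSucc i.succ = i := by
    grind [NCMap.val_collapse]
  refine pull_mk_eq_mk_of_single flow (k := i.succ) (t := t) ?_ (by rw [hi, hflow]) ?_ ?_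
  · intro a b hab
    obtain ⟨ha, hb⟩ := NCMap.collapse_lt_iff.1 hab
    obtain rfl : a = i.castSucc := Fin.ext ha
    obtain rfl : b = i.succ := Fin.ext (by grind)
    simpa [Fin.castSucc_lt_succ.ne] using ht
  · intro a ha
    obtain ⟨a, rfl⟩ := Fin.exists_succAbove_eq ha
    have hia : NCMap.collapse i.castSucc (i.succ.succAbove a) = a := by
      grind [NCMap.val_collapse, Fin.succAbove]
    exact (congrArg p.1 hia).trans (congrFun hp a).symm
  · rintro u ⟨hu, hu'⟩
    rw [hi]
    exact hfree _ (by positivity) (mul_lt_of_lt_one_left ht hu')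

theorem coface_last_mk {q : ℕ} {p : Config b c (q + 1)} {p' : Config b c (q + 2)}
    (hp : p'.1 ∘ Fin.castSucc = p.1) (h : ImmAfter p'.1 (p'.1 (Fin.last (q + 1))) (p.1 0)) :
    coface q (Fin.last (q + 1)) (ConnectedComponents.mk p) = ConnectedComponents.mk p' := by
  obtain ⟨t, ht, hflow, hfree⟩ := exists_flow_eq_of_immAfter h
  have hlast : NCMap.collapse (Fin.last (q + 1)) (Fin.last (q + 1)) = (0 : Fin (q + 1)) := by
    grind [NCMap.val_collapse]
  have hflow_symm (r : ℝ) : flow (r - t) (p.1 0) = flow r (p'.1 (Fin.last (q + 1))) := by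
    rw [← hflow, ← Flow.map_add, sub_add_cancel]
  refine pull_mk_eq_mk_of_single flow (k := Fin.last (q + 1)) (t := -t) ?_ ?_ ?_ ?_
  · intro a b hab
    obtain ⟨ha, hb⟩ := NCMap.collapse_lt_iff.1 hab
    obtain rfl : a = Fin.last (q + 1) := Fin.ext ha
    obtain rfl : b = 0 := Fin.ext (by grind)
    simpa using ht
  · rw [hlast, ← zero_sub, hflow_symm, Flow.map_zero_apply]
  · intro a ha
    obtain ⟨a, rfl⟩ := Fin.exists_castSucc_eq.2 ha
    have hia : NCMap.collapse (Fin.last (q + 1)) a.castSucc = a := by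
      grind [NCMap.val_collapse]
    exact (congrArg p.1 hia).trans (congrFun hp a).symm
  · rintro u ⟨hu, hu'⟩
    rw [hlast, show u * -t = (1 - u) * t - t by ring, hflow_symm]
    exact hfree _ (mul_pos (by linarith) ht) (mul_lt_of_lt_one_left ht (by linarith))

end OneMfld

theorem configuration_components_form_cosimplicial_set (b c : ℕ) :
    ∃ (d : ∀ q : ℕ, Fin (q + 2) → Kconf b c (q + 1) → Kconf b c (q + 2))
      (s : ∀ q : ℕ, Fin (q + 1) → Kconf b c (q + 2) → Kconf b c (q + 1)),
      -- `d^i` for `0 ≤ i ≤ q` doubles `p_i` to its right: if `p'` is obtained from `p`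
      -- by inserting, at position `i+1`, a point immediately after `p_i`, then
      -- `d^i [p] = [p']`
      (∀ (q : ℕ) (i : Fin (q + 1)) (p : Config b c (q + 1)) (p' : Config b c (q + 2)),
          p'.1 ∘ Fin.succAbove (i.succ : Fin (q + 2)) = p.1 →
          ImmAfter p'.1 (p.1 i) (p'.1 (i.succ : Fin (q + 2))) →
          d q i.castSucc (ConnectedComponents.mk p) = ConnectedComponents.mk p') ∧
      -- `d^{q+1}` doubles `p_0` to its left: the new point is appended as the last point
      -- of the configuration, immediately before `p_0`
      (∀ (q : ℕ) (p : Config b c (q + 1)) (p' : Config b c (q + 2)),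
          p'.1 ∘ Fin.castSucc = p.1 →
          ImmAfter p'.1 (p'.1 (Fin.last (q + 1))) (p.1 0) →
          d q (Fin.last (q + 1)) (ConnectedComponents.mk p) = ConnectedComponents.mk p') ∧
      -- `s^j` forgets the point `p_{j+1}` (and relabels)
      (∀ (q : ℕ) (j : Fin (q + 1)) (p : Config b c (q + 2)),
          s q j (ConnectedComponents.mk p) =
            ConnectedComponents.mk
              ⟨p.1 ∘ Fin.succAbove (j.succ : Fin (q + 2)),
                p.2.comp (Fin.succAbove_right_injective)⟩) ∧
      -- the cosimplicial identities:
      -- `d^j d^i = d^i d^{j-1}` for `i < j`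
      (∀ (q : ℕ) (x : Kconf b c (q + 1)) (i j : Fin (q + 2)), i ≤ j →
          d (q + 1) j.succ (d q i x) = d (q + 1) i.castSucc (d q j x)) ∧
      -- `s^j d^i = d^i s^{j-1}` for `i < j`
      (∀ (q : ℕ) (x : Kconf b c (q + 2)) (i : Fin (q + 2)) (j : Fin (q + 1)),
          i ≤ j.castSucc →
          s (q + 1) j.succ (d (q + 1) i.castSucc x) = d q i (s q j x)) ∧
      -- `s^j d^j = 1 = s^j d^{j+1}`
      (∀ (q : ℕ) (x : Kconf b c (q + 2)) (j : Fin (q + 2)),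
          s (q + 1) j (d (q + 1) j.castSucc x) = x ∧
          s (q + 1) j (d (q + 1) j.succ x) = x) ∧
      -- `s^j d^i = d^{i-1} s^j` for `i > j + 1`
      (∀ (q : ℕ) (x : Kconf b c (q + 2)) (i : Fin (q + 2)) (j : Fin (q + 1)),
          j.castSucc < i →
          s (q + 1) j.castSucc (d (q + 1) i.succ x) = d q i (s q j x)) ∧
      -- `s^j s^i = s^i s^{j+1}` for `i ≤ j`
      (∀ (q : ℕ) (x : Kconf b c (q + 3)) (i j : Fin (q + 1)), i ≤ j →
          s q j (s (q + 1) i.castSucc x) = s q i (s (q + 1) j.succ x)) := by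
  open OneMfld NCMap ConfComponents in
  refine ⟨coface, codegeneracy, fun _ _ _ _ => coface_castSucc_mk, fun _ _ _ => coface_last_mk,
    fun _ _ => pull_ofInjective flow _, fun q x i j hij => ?_, fun q x i j hij => ?_,
    fun q x j => ⟨?_, ?_⟩, fun q x i j hij => ?_, fun q x i j hij => ?_⟩ <;>
    simp only [coface, codegeneracy, pull_pull]
  · rw [collapse_comp_collapse hij]
  · rw [collapse_castSucc_comp_skip_succ hij]
  · rw [collapse_castSucc_comp_skip, pull_ofInjective_id]
  · rw [collapse_succ_comp_skip, pull_ofInjective_id]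
  · rw [collapse_succ_comp_skip_castSucc hij]
  · rw [skip_comp_skip hij]
end

section
/- Let X be a disjoint union of b ≥ 0 circles and some number of open intervals. In the chain complex associated to the cosimplicial set K_c(•+1, X) of complete configurations (those meeting every circle component), the homology is concentrated in degree 0, and it is free of rank 1 if b = 1 and X has no interval components' contribution beyond that (i.e. there is exactly one configuration of a single point alone on its component, namely when b = 1), and the degree-0 homology has one generator for each single-point configuration x ∈ K_c(1,X) with d^0 x = d^1 x; in particular H_0 = 0 if b ≠ 1 when X consists only of circles. -/
/-!
STATEMENT 5: Let `X` be a disjoint union of `b ≥ 0` circles and `c` open intervals.  In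
the chain complex associated to the cosimplicial set `K_c(•+1, X)` of complete
configurations (components of configurations meeting every circle component of `X`), with
coface maps the "point doubling" maps, the homology is concentrated in degree 0; the
degree-0 homology has one generator for each single-point configuration
`x ∈ K_c(1,X)` with `d^0 x = d^1 x`; it is free of rank 1 if `X` consists of circles only
and `b = 1`, and it vanishes if `X` consists of circles only and `b ≠ 1`.
-/

open Function

/-- A component of the configuration space is *complete* if its configurations have at
least one point in each circle component of `X`. -/
def CompleteConf {b c q : ℕ} (x : Kconf b c q) : Prop :=
  ∃ p : Config b c q, ConnectedComponents.mk p = x ∧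
    ∀ k : Fin b, ∃ j : Fin q, ∃ u : Real.Angle, p.1 j = Sum.inl (k, u)

/-- Complete components. -/
abbrev KconfC (b c q : ℕ) : Type := {x : Kconf b c q // CompleteConf x}

/-- Given the doubling cofaces `d` (preserving completeness via `hd`), the differential
`d_K = ∑ (-1)^i d^i` of the chain complex of the cosimplicial set of complete
configurations, with `ℤ K_c(q+1,X)` in degree `-q`. -/
noncomputable def diffKc {b c : ℕ}
    (d : ∀ q : ℕ, Fin (q + 2) → Kconf b c (q + 1) → Kconf b c (q + 2))
    (hd : ∀ (q : ℕ) (i : Fin (q + 2)) (x : Kconf b c (q + 1)),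
      CompleteConf x → CompleteConf (d q i x)) (q : ℕ) :
    (KconfC b c (q + 1) →₀ ℤ) →ₗ[ℤ] (KconfC b c (q + 2) →₀ ℤ) :=
  ∑ i : Fin (q + 2), ((-1 : ℤ) ^ (i : ℕ)) •
    Finsupp.lmapDomain ℤ ℤ (fun x : KconfC b c (q + 1) => ⟨d q i x.1, hd q i x.1 x.2⟩)

/-!
For an arbitrary cosimplicial set the complex of `∑ (-1)^i δ^i` is exact in positive degrees, and
its degree-zero cycles are spanned by the `x` with `δ^0 x = δ^1 x`. Indeed `δ^0` is injective and
the squares `δ^{j+1} δ^0 = δ^0 δ^j` are pullbacks, so the pullback of chains along `δ^0` turns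
`δ^{j+1}` into `δ^j`; it is therefore a contracting homotopy in positive degrees. In degree zero,
the value of the boundary of a chain `v` at `δ^0 x` is `v x` unless `δ^0 x = δ^1 x`.

For `K(• + 1, X)` the codegeneracies forget points. Complete configurations are not closed under
them, but the cofaces both preserve and reflect completeness, and this is enough. To double a point
of a configuration to its right, insert a point so close to it that no other point lies between the
two. Both sides of a cosimplicial identity are read off from one configuration obtained by inserting
two points in this way.

A point alone on a circle has the same doublings to the right and to the left. On an interval these
lie in different components, because two points on a line cannot change their order. So only a
one-point configuration on a circle contributes, and it is complete exactly if `b = 1`.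
-/

section AlternatingSum

lemma sum_sum_neg_one_pow_smul_eq_zero {A : Type*} [AddCommGroup A] {n : ℕ}
    {f : Fin (n + 1) → Fin (n + 2) → A} (hf : ∀ i j, i ≤ j → f i j.succ = f j i.castSucc) :
    ∑ i : Fin (n + 1), ∑ j : Fin (n + 2), (-1 : ℤ) ^ (i + j : ℕ) • f i j = 0 := by
  rw [Finset.sum_comm, Fin.sum_sum_eq_sum_triangle_add]
  refine Finset.sum_eq_zero fun i _ => Finset.sum_eq_zero fun j hij => ?_
  rw [hf i j (Finset.mem_Ici.1 hij), ← add_smul]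
  simp [pow_add, mul_comm]

end AlternatingSum

section CofaceComplex

lemma comapDomain_single_of_notMem_range {M X Y : Type*} [Zero M] {f : X → Y} (hf : Injective f)
    {y : Y} (hy : y ∉ Set.range f) (m : M) :
    (Finsupp.single y m).comapDomain f hf.injOn = 0 := by
  ext x
  exact Finsupp.single_eq_of_ne fun h => hy ⟨x, h⟩

lemma lcomapDomain_comp_lmapDomain_of_pullback {R M P X Y Z : Type*} [Semiring R]
    [AddCommMonoid M] [Module R M] {f : X → Z} {g : Y → Z} {fst : P → X} {snd : P → Y}
    (hg : Injective g) (hfst : Injective fst)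
    (comm : ∀ z, f (fst z) = g (snd z)) (lift : ∀ x, f x ∈ Set.range g → x ∈ Set.range fst) :
    Finsupp.lcomapDomain g hg ∘ₗ Finsupp.lmapDomain M R f =
      Finsupp.lmapDomain M R snd ∘ₗ Finsupp.lcomapDomain fst hfst := by
  refine Finsupp.lhom_ext fun x m => ?_
  simp only [LinearMap.comp_apply, Finsupp.lmapDomain_apply, Finsupp.lcomapDomain_apply,
    Finsupp.mapDomain_single]
  by_cases hx : x ∈ Set.range fst
  · obtain ⟨z, rfl⟩ := hx
    simp [comm, Finsupp.comapDomain_single]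
  · have hfx : f x ∉ Set.range g := fun h => hx (lift x h)
    rw [comapDomain_single_of_notMem_range hg hfx, comapDomain_single_of_notMem_range hfst hx,
      Finsupp.mapDomain_zero]

variable {R M : Type*} [Ring R] [AddCommGroup M] [Module R M]
variable {C : ℕ → Type*} {δ : ∀ n, Fin (n + 2) → C n → C (n + 1)}

variable (R M δ) in
/-- The differential `∑ (-1)^i δ^i` on finitely supported chains with coefficients in `M`. -/
noncomputable def cofaceDiff (n : ℕ) : (C n →₀ M) →ₗ[R] (C (n + 1) →₀ M) :=
  ∑ i : Fin (n + 2), ((-1 : ℤ) ^ (i : ℕ)) • Finsupp.lmapDomain M R (δ n i)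

lemma cofaceDiff_zero_apply (v : C 0 →₀ M) : cofaceDiff R M δ 0 v =
    Finsupp.mapDomain (δ 0 0) v - Finsupp.mapDomain (δ 0 1) v := by
  simp [cofaceDiff, Fin.sum_univ_two, sub_eq_add_neg]

variable (δ) in
/-- A sequence of sets with coface maps satisfying the cosimplicial identities, in which `δ^0` is
injective and the squares `δ^{j+1} δ^0 = δ^0 δ^j` are pullbacks. In degree zero there is no such
square, and its place is taken by the last condition. All of this holds in a cosimplicial set; the
codegeneracies are not part of the structure because they do not preserve complete
configurations. -/
structure IsCartesianCofaces : Prop where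
  comm : ∀ n (i j : Fin (n + 2)), i ≤ j → ∀ x,
    δ (n + 1) j.succ (δ n i x) = δ (n + 1) i.castSucc (δ n j x)
  injective_zero : ∀ n, Injective (δ n 0)
  mem_range_zero : ∀ n (j : Fin (n + 2)) x,
    δ (n + 1) j.succ x ∈ Set.range (δ (n + 1) 0) → x ∈ Set.range (δ n 0)
  zero_eq_one : ∀ x, δ 0 1 x ∈ Set.range (δ 0 0) → δ 0 0 x = δ 0 1 x

namespace IsCartesianCofaces

variable (H : IsCartesianCofaces δ)
include H

lemma subtype {P : ∀ n, C n → Prop} (hP : ∀ n i x, P n x → P (n + 1) (δ n i x))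
    (hP₀ : ∀ n x, P (n + 1) (δ n 0 x) → P n x) :
    IsCartesianCofaces (C := fun n => {x // P n x}) fun n i x => ⟨δ n i x.1, hP n i x.1 x.2⟩ where
  comm n i j hij x := Subtype.ext (H.comm n i j hij x.1)
  injective_zero n x y hxy := Subtype.ext (H.injective_zero n (congrArg Subtype.val hxy))
  mem_range_zero n j x := by
    rintro ⟨z, hz⟩
    obtain ⟨w, hw⟩ := H.mem_range_zero n j x.1 ⟨z.1, congrArg Subtype.val hz⟩
    exact ⟨⟨w, hP₀ n w (hw ▸ x.2)⟩, Subtype.ext hw⟩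
  zero_eq_one x := by
    rintro ⟨z, hz⟩
    exact Subtype.ext (H.zero_eq_one x.1 ⟨z.1, congrArg Subtype.val hz⟩)

lemma cofaceDiff_comp_cofaceDiff (n : ℕ) :
    cofaceDiff R M δ (n + 1) ∘ₗ cofaceDiff R M δ n = 0 := by
  refine Finsupp.lhom_ext fun x m => ?_
  simp only [cofaceDiff, LinearMap.comp_apply, LinearMap.sum_apply, LinearMap.smul_apply,
    Finsupp.lmapDomain_apply, Finsupp.mapDomain_single, map_sum, map_zsmul, Finset.smul_sum,
    smul_smul, ← pow_add, LinearMap.zero_apply]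
  exact sum_sum_neg_one_pow_smul_eq_zero fun i j hij => by rw [H.comm n i j hij]

variable (R M) in
/-- Pullback of chains along `δ^0`, the contracting homotopy. -/
noncomputable def homotopy (n : ℕ) : (C (n + 1) →₀ M) →ₗ[R] (C n →₀ M) :=
  Finsupp.lcomapDomain (δ n 0) (H.injective_zero n)

lemma homotopy_comp_cofaceDiff_add (n : ℕ) :
    H.homotopy R M (n + 1) ∘ₗ cofaceDiff R M δ (n + 1) + cofaceDiff R M δ n ∘ₗ H.homotopy R M n =
      LinearMap.id := by
  refine LinearMap.ext fun v => ?_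
  have h_zero : H.homotopy R M (n + 1) (Finsupp.mapDomain (δ (n + 1) 0) v) = v :=
    Finsupp.leftInverse_lcomapDomain_mapDomain (R := R) _ (H.injective_zero (n + 1)) v
  have h_succ (j : Fin (n + 2)) :
      H.homotopy R M (n + 1) (Finsupp.mapDomain (δ (n + 1) j.succ) v) =
        Finsupp.mapDomain (δ n j) (H.homotopy R M n v) :=
    LinearMap.congr_fun (lcomapDomain_comp_lmapDomain_of_pullback (H.injective_zero (n + 1))
      (H.injective_zero n) (H.comm n 0 j (Fin.zero_le j)) (H.mem_range_zero n j)) v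
  rw [cofaceDiff, Fin.sum_univ_succ]
  simp [cofaceDiff, h_zero, h_succ, pow_succ]

theorem ker_cofaceDiff_succ (n : ℕ) :
    LinearMap.ker (cofaceDiff R M δ (n + 1)) = LinearMap.range (cofaceDiff R M δ n) := by
  refine le_antisymm (fun v hv => ?_)
    (LinearMap.range_le_ker_iff.2 (H.cofaceDiff_comp_cofaceDiff (R := R) (M := M) n))
  have h := LinearMap.congr_fun (H.homotopy_comp_cofaceDiff_add (R := R) (M := M) n) v
  rw [LinearMap.add_apply, LinearMap.comp_apply, LinearMap.mem_ker.1 hv, map_zero, zero_add] at h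
  exact ⟨_, h⟩

lemma cofaceDiff_apply_zero {x : C 0} (hx : δ 0 0 x ≠ δ 0 1 x) (v : C 0 →₀ M) :
    cofaceDiff R M δ 0 v (δ 0 0 x) = v x := by
  have h : δ 0 0 x ∉ Set.range (δ 0 1) := by
    rintro ⟨y, hy⟩
    have hyx := (H.zero_eq_one y ⟨x, hy.symm⟩).trans hy
    exact hx ((H.injective_zero 0 hyx) ▸ hy.symm)
  rw [cofaceDiff_zero_apply, Finsupp.sub_apply, Finsupp.mapDomain_apply (H.injective_zero 0),
    Finsupp.mapDomain_of_notMem_range v _ h, sub_zero]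

theorem ker_cofaceDiff_zero :
    LinearMap.ker (cofaceDiff R M δ 0) = Finsupp.supported M R {x | δ 0 0 x = δ 0 1 x} := by
  ext v
  rw [LinearMap.mem_ker, Finsupp.mem_supported']
  refine ⟨fun hv x hx => ?_, fun hv => ?_⟩
  · rw [← H.cofaceDiff_apply_zero (R := R) hx, hv, Finsupp.zero_apply]
  · rw [cofaceDiff_zero_apply, sub_eq_zero]
    exact Finsupp.mapDomain_congr fun x hx =>
      not_not.1 fun h => (Finsupp.mem_support_iff.1 hx) (hv x h)

end IsCartesianCofaces

end CofaceComplex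

section StrictOrder

lemma exists_forall_ne_and_not_rel_of_finite {α ι : Type*} [Finite ι] {r : α → α → Prop}
    [IsStrictOrder α r] {P : α → Prop} (hP : ∃ x, P x) (hr : ∀ {w x}, r w x → P w)
    (h : ∀ x, P x → ∃ w, r w x) (f : ι → α) : ∃ x, P x ∧ ∀ j, f j ≠ x ∧ ¬ r (f j) x := by
  by_cases hf : ∃ j, P (f j)
  · obtain ⟨j, hj, hmin⟩ : ∃ j, P (f j) ∧ ∀ k, P (f k) → ¬ r (f k) (f j) :=
      (Finite.wellFounded_of_trans_of_irrefl (InvImage r f)).has_min {j | P (f j)} hf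
    obtain ⟨w, hw⟩ := h (f j) hj
    refine ⟨w, hr hw, fun k => ⟨?_, fun hk => hmin k (hr hk) (_root_.trans hk hw)⟩⟩
    rintro rfl
    exact hmin k (hr hw) hw
  · obtain ⟨x, hx⟩ := hP
    exact ⟨x, hx, fun j => ⟨fun hj => hf ⟨j, hj ▸ hx⟩, fun hj => hf ⟨j, hr hj⟩⟩⟩

end StrictOrder

section CircularOrder

lemma sbtw_or_sbtw_of_ne {α : Type*} [CircularOrder α] {a b c : α} (hab : a ≠ b) (hbc : b ≠ c)
    (hca : c ≠ a) : sbtw a b c ∨ sbtw c b a := by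
  by_contra! h
  rw [← btw_iff_not_sbtw, ← btw_iff_not_sbtw] at h
  rcases h.2.antisymm h.1 with h | h | h
  exacts [hab h, hbc h, hca h]

variable {𝕜 : Type*} [AddCommGroup 𝕜] [LinearOrder 𝕜] [IsOrderedAddMonoid 𝕜] [Archimedean 𝕜]
  {p : 𝕜} [Fact (0 < p)]

lemma sbtw_coe_addCircle {x y z : 𝕜} (hxy : x < y) (hyz : y < z) (hzx : z < x + p) :
    sbtw (x : AddCircle p) y z := by
  have hp : 0 < p := Fact.out
  have hx : toIocMod hp z x = x + p :=
    (toIocMod_eq_iff hp).2 ⟨⟨hzx, add_le_add_left (hxy.trans hyz).le p⟩, -1, by simp⟩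
  have hy : toIcoMod hp z y = y + p :=
    (toIcoMod_eq_iff hp).2 ⟨⟨(hzx.trans (add_lt_add_left hxy p)).le, add_lt_add_left hyz p⟩,
      -1, by simp⟩
  rw [sbtw_iff_not_btw, QuotientAddGroup.btw_coe_iff, not_le, hx, hy]
  exact add_lt_add_left hxy p

lemma exists_sbtw_of_ne [DenselyOrdered 𝕜] {a b : AddCircle p} (hab : a ≠ b) :
    ∃ w, sbtw a w b := by
  obtain ⟨x, rfl⟩ := QuotientAddGroup.mk_surjective a
  obtain ⟨y, ⟨hxy, hyx⟩, rfl⟩ := (AddCircle.coe_image_Ico_eq p x).ge (Set.mem_univ b)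
  obtain ⟨w, hxw, hwy⟩ := exists_between (hxy.lt_of_ne fun h => hab (congrArg _ h))
  exact ⟨w, sbtw_coe_addCircle hxw hwy hyx⟩

end CircularOrder

section OneMfld

variable {b c : ℕ}

/-- `u` and `x` are distinct points of one component, and `u < x` if that component is an
interval: this is what `ImmAfter S u x` says when `S` is empty. -/
def Precedes : OneMfld b c → OneMfld b c → Prop
  | .inl (k, u), .inl (l, x) => k = l ∧ u ≠ x
  | .inr (k, u), .inr (l, x) => k = l ∧ u < x
  | _, _ => False

namespace Precedes

lemma ne : ∀ {u x : OneMfld b c}, Precedes u x → u ≠ x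
  | .inl _, .inl _, h, rfl => h.2 rfl
  | .inr _, .inr _, h, rfl => h.2.ne rfl

lemma exists_right : ∀ u : OneMfld b c, ∃ x, Precedes u x
  | .inl (k, u) => ⟨.inl (k, u + Real.pi), rfl, by simp [Real.Angle.pi_ne_zero]⟩
  | .inr (k, u) => ⟨.inr (k, u + 1), rfl, lt_add_one u⟩

lemma exists_left : ∀ x : OneMfld b c, ∃ u, Precedes u x
  | .inl (k, x) => ⟨.inl (k, x + Real.pi), rfl, by simp [Real.Angle.pi_ne_zero]⟩
  | .inr (k, x) => ⟨.inr (k, x - 1), rfl, sub_one_lt x⟩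

lemma exists_sBtwn : ∀ {u x : OneMfld b c}, Precedes u x → ∃ w, SBtwn u w x
  | .inl (k, _), .inl _, h =>
    have : Fact (0 < 2 * Real.pi) := ⟨Real.two_pi_pos⟩
    have ⟨w, hw⟩ := exists_sbtw_of_ne h.2
    ⟨.inl (k, w), rfl, h.1, hw⟩
  | .inr (k, _), .inr _, h =>
    have ⟨w, hw⟩ := exists_between h.2
    ⟨.inr (k, w), rfl, h.1, hw⟩

lemma sBtwn_or_sBtwn_right : ∀ {u x y : OneMfld b c}, Precedes u x → Precedes u y → x ≠ y →
    SBtwn u x y ∨ SBtwn u y x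
  | .inl (k, _), .inl (_, _), .inl (_, _), ⟨rfl, hx⟩, ⟨rfl, hy⟩, hxy =>
    (sbtw_or_sbtw_of_ne hx (fun h => hxy (by rw [h])) hy.symm).imp
      (fun h => ⟨rfl, rfl, h⟩)
      fun h => ⟨rfl, rfl, h.cyclic_right⟩
  | .inr (k, _), .inr (_, _), .inr (_, _), ⟨rfl, hx⟩, ⟨rfl, hy⟩, hxy =>
    (lt_or_gt_of_ne fun h => hxy (by rw [h])).imp
      (fun h => ⟨rfl, rfl, hx, h⟩)
      fun h => ⟨rfl, rfl, hy, h⟩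

lemma sBtwn_or_sBtwn_left : ∀ {x y w : OneMfld b c}, Precedes x w → Precedes y w → x ≠ y →
    SBtwn x y w ∨ SBtwn y x w
  | .inl (k, _), .inl (_, _), .inl (_, _), ⟨rfl, hx⟩, ⟨rfl, hy⟩, hxy =>
    (sbtw_or_sbtw_of_ne (fun h => hxy (by rw [h])) hy hx.symm).imp
      (fun h => ⟨rfl, rfl, h⟩)
      fun h => ⟨rfl, rfl, h.cyclic_left⟩
  | .inr (k, _), .inr (_, _), .inr (_, _), ⟨rfl, hx⟩, ⟨rfl, hy⟩, hxy =>
    (lt_or_gt_of_ne fun h => hxy (by rw [h])).imp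
      (fun h => ⟨rfl, rfl, h, hy⟩)
      fun h => ⟨rfl, rfl, h, hx⟩

end Precedes

namespace SBtwn

lemma precedes_left : ∀ {u v w : OneMfld b c}, SBtwn u v w → Precedes u v
  | .inl _, .inl _, .inl _, h => ⟨h.1, fun e => sbtw_irrefl_left (e ▸ h.2.2)⟩
  | .inr _, .inr _, .inr _, h => ⟨h.1, h.2.2.1⟩

lemma precedes_right : ∀ {u v w : OneMfld b c}, SBtwn u v w → Precedes v w
  | .inl _, .inl _, .inl _, h => ⟨h.2.1, fun e => sbtw_irrefl_right (e ▸ h.2.2)⟩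
  | .inr _, .inr _, .inr _, h => ⟨h.2.1, h.2.2.2⟩

lemma trans_left : ∀ {u v w x : OneMfld b c}, SBtwn u v w → SBtwn u x v → SBtwn u x w
  | .inl _, .inl _, .inl _, .inl _, h, h' =>
    ⟨h'.1, h'.2.1.trans h.2.1, sbtw_trans_right h'.2.2 h.2.2⟩
  | .inr _, .inr _, .inr _, .inr _, h, h' =>
    ⟨h'.1, h'.2.1.trans h.2.1, h'.2.2.1, h'.2.2.2.trans h.2.2.2⟩

lemma trans_right : ∀ {u v w x : OneMfld b c}, SBtwn u v w → SBtwn v x w → SBtwn u x w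
  | .inl _, .inl _, .inl _, .inl _, h, h' =>
    ⟨h.1.trans h'.1, h'.2.1, h.2.2.trans_left h'.2.2⟩
  | .inr _, .inr _, .inr _, .inr _, h, h' =>
    ⟨h.1.trans h'.1, h'.2.1, h.2.2.1.trans h'.2.2.1, h'.2.2.2⟩

end SBtwn

lemma immAfter_iff {n : ℕ} {S : Fin n → OneMfld b c} : ∀ {u x : OneMfld b c},
    ImmAfter S u x ↔ Precedes u x ∧ ∀ j, ¬ SBtwn u (S j) x
  | .inl (k, u), .inl (l, x) => by
    simp only [ImmAfter, Precedes, ne_eq, Sum.inl.injEq, Prod.mk.injEq]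
    grind
  | .inl _, .inr _ => by simp [ImmAfter, Precedes]
  | .inr _, .inl _ => by simp [ImmAfter, Precedes]
  | .inr (k, u), .inr (l, x) => by
    simp only [ImmAfter, Precedes, ne_eq, Sum.inr.injEq, Prod.mk.injEq]
    grind

lemma immAfter_iff_precedes {n : ℕ} {S : Fin n → OneMfld b c} {u x : OneMfld b c}
    (hS : ∀ j, S j = u ∨ S j = x) : ImmAfter S u x ↔ Precedes u x := by
  refine immAfter_iff.trans (and_iff_left fun j h => ?_)
  rcases hS j with hj | hj
  exacts [h.precedes_left.ne hj.symm, h.precedes_right.ne hj]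

namespace ImmAfter

lemma precedes {n : ℕ} {S : Fin n → OneMfld b c} {u x : OneMfld b c} (h : ImmAfter S u x) :
    Precedes u x :=
  (immAfter_iff.1 h).1

lemma comp {m n : ℕ} {S : Fin n → OneMfld b c} {u x : OneMfld b c} (h : ImmAfter S u x)
    (f : Fin m → Fin n) : ImmAfter (S ∘ f) u x :=
  ⟨h.1, fun j => h.2.1 (f j), h.2.2⟩

lemma exists_right {n : ℕ} (S : Fin n → OneMfld b c) (u : OneMfld b c) :
    ∃ x, (∀ j, S j ≠ x) ∧ ImmAfter S u x := by
  have : IsStrictOrder (OneMfld b c) (SBtwn u) :=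
    { irrefl := fun _ h => h.precedes_right.ne rfl
      trans := fun _ _ _ h h' => h'.trans_left h }
  obtain ⟨x, hux, hx⟩ := exists_forall_ne_and_not_rel_of_finite (Precedes.exists_right u)
    SBtwn.precedes_left (fun _ => Precedes.exists_sBtwn) S
  exact ⟨x, fun j => (hx j).1, immAfter_iff.2 ⟨hux, fun j => (hx j).2⟩⟩

lemma exists_left {n : ℕ} (S : Fin n → OneMfld b c) (u : OneMfld b c) :
    ∃ x, (∀ j, S j ≠ x) ∧ ImmAfter S x u := by
  have : IsStrictOrder (OneMfld b c) fun w x => SBtwn x w u :=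
    { irrefl := fun _ h => h.precedes_left.ne rfl
      trans := fun _ _ _ h h' => h'.trans_right h }
  obtain ⟨x, hxu, hx⟩ := exists_forall_ne_and_not_rel_of_finite (Precedes.exists_left u)
    SBtwn.precedes_right (fun _ => Precedes.exists_sBtwn) S
  exact ⟨x, fun j => (hx j).1, immAfter_iff.2 ⟨hxu, fun j => (hx j).2⟩⟩

section SuccAbove

variable {n : ℕ} {S : Fin (n + 1) → OneMfld b c} {r k l : Fin (n + 1)} {y : OneMfld b c}

lemma of_comp_succAbove {u : OneMfld b c} (h : ImmAfter (S ∘ r.succAbove) u y)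
    (hr : ¬ SBtwn u (S r) y) : ImmAfter S u y :=
  immAfter_iff.2 ⟨h.precedes, (Fin.forall_iff_succAbove r).2 ⟨hr, h.2.1⟩⟩

lemma of_comp_succAbove_of_ne (h : ImmAfter S (S k) (S r))
    (h' : ImmAfter (S ∘ r.succAbove) (S l) y) (hkl : S k ≠ S l) : ImmAfter S (S l) y := by
  refine h'.of_comp_succAbove fun hlr => ?_
  rcases h.precedes.sBtwn_or_sBtwn_left hlr.precedes_left hkl with hkl | hlk
  · exact h.2.1 l hkl
  · obtain ⟨k, rfl⟩ := Fin.exists_succAbove_eq (ne_of_apply_ne S h.precedes.ne)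
    exact h'.2.1 k (hlr.trans_left hlk)

lemma of_comp_succAbove_right (h : ImmAfter S (S k) (S r))
    (h' : ImmAfter (S ∘ r.succAbove) (S k) (S l)) (hrl : S r ≠ S l) :
    ImmAfter S (S r) (S l) := by
  have hkrl : SBtwn (S k) (S r) (S l) :=
    (h.precedes.sBtwn_or_sBtwn_right h'.precedes hrl).resolve_right (h.2.1 l)
  refine immAfter_iff.2 ⟨hkrl.precedes_right, (Fin.forall_iff_succAbove r).2
    ⟨fun hrr => hrr.precedes_left.ne rfl, fun j hj => h'.2.1 j (hkrl.trans_right hj)⟩⟩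

end SuccAbove

end ImmAfter

end OneMfld

section Config

variable {b c : ℕ}

lemma injective_insertNth_iff {α : Type*} {n : ℕ} {r : Fin (n + 1)} {x : α} {g : Fin n → α} :
    Injective (r.insertNth x g : Fin (n + 1) → α) ↔ Injective g ∧ ∀ j, g j ≠ x := by
  rw [Injective, r.forall_iff_succAbove]
  simp [Injective, r.forall_iff_succAbove, forall_and, eq_comm, and_comm]

/-- The configuration obtained by forgetting the point with index `r`. -/
def forgetPt {m : ℕ} (r : Fin (m + 1)) (p : Config b c (m + 1)) : Config b c m :=
  ⟨p.1 ∘ r.succAbove, p.2.comp Fin.succAbove_right_injective⟩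

lemma forgetPt_apply {m : ℕ} (r : Fin (m + 1)) (p : Config b c (m + 1)) (j : Fin m) :
    (forgetPt r p).1 j = p.1 (r.succAbove j) := rfl

lemma forgetPt_forgetPt {m : ℕ} {i j : Fin (m + 1)} (hij : i ≤ j) (p : Config b c (m + 2)) :
    forgetPt i (forgetPt j.succ p) = forgetPt j (forgetPt i.castSucc p) := by
  refine Subtype.ext ((Fin.removeNth_removeNth_eq_swap p.1 i j.succ).trans ?_)
  rw [Fin.predAbove_succ_of_le i j hij,
    Fin.succAbove_of_castSucc_lt j.succ i (Fin.castSucc_lt_succ_iff.2 hij)]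
  rfl

lemma exists_forgetPt_eq {m : ℕ} (r : Fin (m + 1)) {p : Config b c m} {x : OneMfld b c}
    (hx : ∀ j, p.1 j ≠ x) : ∃ p', forgetPt r p' = p ∧ p'.1 r = x :=
  ⟨⟨r.insertNth x p.1, injective_insertNth_iff.2 ⟨p.2, hx⟩⟩,
    Subtype.ext (funext fun j => by simp [forgetPt]), by simp⟩

/-- The point with index `i + 1` is immediately after the one with index `i`, so that `p` is
obtained by doubling the latter to its right. -/
def IsRightDouble {m : ℕ} (i : Fin (m + 1)) (p : Config b c (m + 2)) : Prop :=
  ImmAfter p.1 (p.1 i.castSucc) (p.1 i.succ)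

/-- The last point is immediately before the one with index `0`, so that `p` is obtained by doubling
the latter to its left. -/
def IsLeftDouble {m : ℕ} (p : Config b c (m + 2)) : Prop :=
  ImmAfter p.1 (p.1 (Fin.last (m + 1))) (p.1 0)

lemma exists_isRightDouble {m : ℕ} (i : Fin (m + 1)) (p : Config b c (m + 1)) :
    ∃ p', forgetPt i.succ p' = p ∧ IsRightDouble i p' := by
  obtain ⟨x, hx, h⟩ := ImmAfter.exists_right p.1 (p.1 i)
  obtain ⟨p', rfl, rfl⟩ := exists_forgetPt_eq i.succ hx
  rw [forgetPt_apply, Fin.succAbove_succ_self] at h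
  exact ⟨p', rfl, h.of_comp_succAbove fun h => h.precedes_right.ne rfl⟩

lemma exists_isLeftDouble {m : ℕ} (p : Config b c (m + 1)) :
    ∃ p', forgetPt (Fin.last (m + 1)) p' = p ∧ IsLeftDouble p' := by
  obtain ⟨x, hx, h⟩ := ImmAfter.exists_left p.1 (p.1 0)
  obtain ⟨p', rfl, rfl⟩ := exists_forgetPt_eq (Fin.last (m + 1)) hx
  rw [forgetPt_apply, Fin.succAbove_last_apply, Fin.castSucc_zero] at h
  exact ⟨p', rfl, h.of_comp_succAbove fun h => h.precedes_left.ne rfl⟩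

namespace IsRightDouble

variable {m : ℕ} {i j : Fin (m + 1)} {p : Config b c (m + 3)}

protected lemma forgetPt (hij : i ≤ j) (h : IsRightDouble i.castSucc p) :
    IsRightDouble i (forgetPt j.succ.succ p) := by
  rw [IsRightDouble, forgetPt_apply, forgetPt_apply,
    Fin.succAbove_succ_of_le _ _ (Fin.castSucc_lt_succ_iff.2 hij).le,
    Fin.succAbove_succ_of_le _ _ (Fin.succ_le_succ_iff.2 hij)]
  exact h.comp _

lemma succ_of_forgetPt (hij : i ≤ j) (hi : IsRightDouble i.castSucc p)
    (hj : IsRightDouble j (forgetPt i.castSucc.succ p)) : IsRightDouble j.succ p := by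
  rw [IsRightDouble, forgetPt_apply, forgetPt_apply,
    Fin.succAbove_succ_of_lt _ _ (Fin.castSucc_lt_succ_iff.2 hij)] at hj
  rcases hij.eq_or_lt with rfl | hlt
  · rw [Fin.succAbove_succ_self] at hj
    exact hi.of_comp_succAbove_right hj (p.2.ne ((Fin.succ_injective _).ne Fin.castSucc_lt_succ.ne))
  · rw [Fin.succAbove_succ_of_lt _ _ (Fin.castSucc_lt_castSucc_iff.2 hlt)] at hj
    exact hi.of_comp_succAbove_of_ne hj
      (p.2.ne ((Fin.castSucc_injective _).ne (Fin.castSucc_lt_succ_iff.2 hij).ne))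

lemma isLeftDouble_of_forgetPt (hi : IsRightDouble i.castSucc p)
    (h : IsLeftDouble (forgetPt i.castSucc.succ p)) : IsLeftDouble p := by
  rw [IsLeftDouble, forgetPt_apply, forgetPt_apply, Fin.succ_succAbove_zero,
    Fin.succAbove_succ_of_lt _ _ (Fin.castSucc_lt_last i)] at h
  exact hi.of_comp_succAbove_of_ne h (p.2.ne (Fin.castSucc_lt_last _).ne)

lemma isLeftDouble_of_forgetPt_last (hi : IsRightDouble (Fin.last (m + 1)) p)
    (h : IsLeftDouble (forgetPt (Fin.last (m + 2)) p)) : IsLeftDouble p := by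
  rw [IsLeftDouble, forgetPt_apply, forgetPt_apply, Fin.succAbove_last] at h
  exact hi.of_comp_succAbove_right h (p.2.ne (Fin.succ_ne_zero _))

end IsRightDouble

lemma continuous_forgetPt {m : ℕ} (r : Fin (m + 1)) :
    Continuous (forgetPt r : Config b c (m + 1) → Config b c m) := by
  refine Continuous.subtype_mk (continuous_pi fun l => ?_) _
  exact (continuous_apply (r.succAbove l)).comp continuous_subtype_val

/-- The map induced on components by forgetting the point with index `r`. -/
noncomputable def forgetK {m : ℕ} (r : Fin (m + 1)) : Kconf b c (m + 1) → Kconf b c m :=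
  (ConnectedComponents.continuous_coe.comp (continuous_forgetPt r)).connectedComponentsLift

lemma forgetK_mk {m : ℕ} (r : Fin (m + 1)) (p : Config b c (m + 1)) :
    forgetK r (ConnectedComponents.mk p) = ConnectedComponents.mk (forgetPt r p) := rfl

end Config

/-- The maps `d` are the point doubling cofaces: `d^i` adds a point immediately after the one with
index `i`, and the last coface adds a point immediately before the one with index `0`. -/
structure IsDoubling {b c : ℕ}
    (d : ∀ q : ℕ, Fin (q + 2) → Kconf b c (q + 1) → Kconf b c (q + 2)) : Prop where
  right : ∀ {n : ℕ} {i : Fin (n + 1)} {p : Config b c (n + 2)}, IsRightDouble i p →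
    d n i.castSucc (ConnectedComponents.mk (forgetPt i.succ p)) = ConnectedComponents.mk p
  left : ∀ {n : ℕ} {p : Config b c (n + 2)}, IsLeftDouble p →
    d n (Fin.last (n + 1)) (ConnectedComponents.mk (forgetPt (Fin.last (n + 1)) p)) =
      ConnectedComponents.mk p

namespace IsDoubling

variable {b c : ℕ} {d : ∀ q : ℕ, Fin (q + 2) → Kconf b c (q + 1) → Kconf b c (q + 2)}
  (hd : IsDoubling d)
include hd

lemma comm_castSucc_castSucc {n : ℕ} {i j : Fin (n + 1)} (hij : i ≤ j) (x : Kconf b c (n + 1)) :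
    d (n + 1) j.castSucc.succ (d n i.castSucc x) =
      d (n + 1) i.castSucc.castSucc (d n j.castSucc x) := by
  obtain ⟨p, rfl⟩ := ConnectedComponents.surjective_coe x
  obtain ⟨p₁, rfl, hj₁⟩ := exists_isRightDouble j p
  obtain ⟨p, rfl, hi⟩ := exists_isRightDouble i.castSucc p₁
  have hp : forgetPt i.succ (forgetPt j.succ.succ p) =
      forgetPt j.succ (forgetPt i.castSucc.succ p) :=
    forgetPt_forgetPt (Fin.succ_le_succ_iff.2 hij) p
  rw [hd.right hj₁, hd.right hi, ← hp, hd.right (hi.forgetPt hij), Fin.succ_castSucc,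
    hd.right (hi.succ_of_forgetPt hij hj₁)]

lemma comm_castSucc_last {n : ℕ} (i : Fin (n + 1)) (x : Kconf b c (n + 1)) :
    d (n + 1) (Fin.last (n + 2)) (d n i.castSucc x) =
      d (n + 1) i.castSucc.castSucc (d n (Fin.last (n + 1)) x) := by
  obtain ⟨p, rfl⟩ := ConnectedComponents.surjective_coe x
  obtain ⟨p₁, rfl, hl₁⟩ := exists_isLeftDouble p
  obtain ⟨p, rfl, hi⟩ := exists_isRightDouble i.castSucc p₁
  have hp : forgetPt i.succ (forgetPt (Fin.last (n + 2)) p) =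
      forgetPt (Fin.last (n + 1)) (forgetPt i.castSucc.succ p) :=
    forgetPt_forgetPt (Fin.le_last i.succ) p
  have hi' : IsRightDouble i (forgetPt (Fin.last (n + 2)) p) := hi.forgetPt (Fin.le_last i)
  rw [hd.left hl₁, hd.right hi, ← hp, hd.right hi', hd.left (hi.isLeftDouble_of_forgetPt hl₁)]

lemma comm_last_last {n : ℕ} (x : Kconf b c (n + 1)) :
    d (n + 1) (Fin.last (n + 2)) (d n (Fin.last (n + 1)) x) =
      d (n + 1) (Fin.last (n + 1)).castSucc (d n (Fin.last (n + 1)) x) := by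
  obtain ⟨p, rfl⟩ := ConnectedComponents.surjective_coe x
  obtain ⟨p₁, rfl, hl⟩ := exists_isLeftDouble p
  obtain ⟨p, rfl, hr⟩ := exists_isRightDouble (Fin.last (n + 1)) p₁
  rw [hd.left hl, hd.right hr, Fin.succ_last, hd.left (hr.isLeftDouble_of_forgetPt_last hl)]

lemma comm {n : ℕ} {i j : Fin (n + 2)} (hij : i ≤ j) (x : Kconf b c (n + 1)) :
    d (n + 1) j.succ (d n i x) = d (n + 1) i.castSucc (d n j x) := by
  induction i using Fin.lastCases with
  | last =>
    obtain rfl := Fin.last_le_iff.1 hij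
    exact hd.comm_last_last x
  | cast i =>
    induction j using Fin.lastCases with
    | last => exact hd.comm_castSucc_last i x
    | cast j => exact hd.comm_castSucc_castSucc (Fin.castSucc_le_castSucc_iff.1 hij) x

lemma forgetK_castSucc {n : ℕ} (i : Fin (n + 1)) (x : Kconf b c (n + 1)) :
    forgetK i.succ (d n i.castSucc x) = x := by
  obtain ⟨p, rfl⟩ := ConnectedComponents.surjective_coe x
  obtain ⟨p, rfl, h⟩ := exists_isRightDouble i p
  rw [hd.right h, forgetK_mk]

lemma forgetK_last {n : ℕ} (x : Kconf b c (n + 1)) :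
    forgetK (Fin.last (n + 1)) (d n (Fin.last (n + 1)) x) = x := by
  obtain ⟨p, rfl⟩ := ConnectedComponents.surjective_coe x
  obtain ⟨p, rfl, h⟩ := exists_isLeftDouble p
  rw [hd.left h, forgetK_mk]

lemma injective_castSucc {n : ℕ} (i : Fin (n + 1)) : Injective (d n i.castSucc) :=
  LeftInverse.injective (hd.forgetK_castSucc i)

lemma exists_forgetK_succ {n : ℕ} (j : Fin (n + 2)) :
    ∃ k : Fin (n + 1), ∀ x, forgetK k.succ.succ (d (n + 1) j.succ x) = x := by
  induction j using Fin.lastCases with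
  | last => exact ⟨Fin.last n, hd.forgetK_last⟩
  | cast k => exact ⟨k, hd.forgetK_castSucc k.succ⟩

lemma forgetK_zero {n : ℕ} (k : Fin (n + 1)) (x : Kconf b c (n + 2)) :
    forgetK k.succ.succ (d (n + 1) 0 x) = d n 0 (forgetK k.succ x) := by
  obtain ⟨p, rfl⟩ := ConnectedComponents.surjective_coe x
  obtain ⟨p, rfl, h⟩ := exists_isRightDouble 0 p
  have hp : forgetPt (0 : Fin (n + 1)).succ (forgetPt k.succ.succ p) =
      forgetPt k.succ (forgetPt (0 : Fin (n + 2)).succ p) :=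
    forgetPt_forgetPt (Fin.succ_le_succ_iff.2 (Fin.zero_le k)) p
  have h' : IsRightDouble 0 (forgetPt k.succ.succ p) := h.forgetPt (Fin.zero_le k)
  rw [← Fin.castSucc_zero, hd.right h, forgetK_mk, forgetK_mk, ← hp, ← Fin.castSucc_zero,
    hd.right h']

theorem isCartesianCofaces : IsCartesianCofaces (C := fun n => Kconf b c (n + 1)) d where
  comm n _ _ hij x := hd.comm hij x
  injective_zero n := hd.injective_castSucc 0
  mem_range_zero n j x := by
    rintro ⟨z, hz⟩
    obtain ⟨k, hk⟩ := hd.exists_forgetK_succ j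
    exact ⟨forgetK k.succ z, by rw [← hd.forgetK_zero, hz, hk]⟩
  zero_eq_one x := by
    rintro ⟨z, hz⟩
    have h₀ : forgetK 1 (d 0 0 z) = z := hd.forgetK_castSucc 0 z
    have h₁ : forgetK 1 (d 0 1 x) = x := hd.forgetK_last x
    rw [← hz, ← h₀, hz, h₁]

end IsDoubling

section Components

variable {b c : ℕ}

/-- The component of a 1-manifold containing a given point. -/
def componentPt : OneMfld b c → Fin b ⊕ Fin c := Sum.map Prod.fst Prod.fst

lemma continuous_componentPt : Continuous (componentPt : OneMfld b c → Fin b ⊕ Fin c) :=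
  continuous_fst.sumMap continuous_fst

lemma componentPt_eq_inl_iff {x : OneMfld b c} {k : Fin b} :
    componentPt x = .inl k ↔ ∃ u, x = .inl (k, u) := by
  rcases x with ⟨l, u⟩ | ⟨l, u⟩ <;> simp [componentPt]

lemma Precedes.componentPt_eq : ∀ {u x : OneMfld b c}, Precedes u x →
    componentPt u = componentPt x
  | .inl _, .inl _, h => congrArg Sum.inl h.1
  | .inr _, .inr _, h => congrArg Sum.inr h.1

lemma Precedes.symm_of_componentPt_eq_inl {k : Fin b} : ∀ {u x : OneMfld b c}, Precedes u x →
    componentPt u = .inl k → Precedes x u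
  | .inl _, .inl _, h, _ => ⟨h.1.symm, h.2.symm⟩

lemma continuous_componentPt_apply {q : ℕ} (j : Fin q) :
    Continuous fun p : Config b c q => componentPt (p.1 j) :=
  continuous_componentPt.comp ((continuous_apply j).comp continuous_subtype_val)

lemma completeConf_mk_iff {q : ℕ} {p : Config b c q} :
    CompleteConf (ConnectedComponents.mk p) ↔ ∀ k, ∃ j, componentPt (p.1 j) = .inl k := by
  simp only [componentPt_eq_inl_iff]
  refine ⟨?_, fun h => ⟨p, rfl, h⟩⟩
  rintro ⟨p', hp', h⟩ k
  obtain ⟨j, hj⟩ := h k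
  have hpj : componentPt (p'.1 j) = componentPt (p.1 j) :=
    congrArg (continuous_componentPt_apply j).connectedComponentsLift hp'
  exact ⟨j, componentPt_eq_inl_iff.1 (hpj ▸ componentPt_eq_inl_iff.2 hj)⟩

lemma IsDoubling.completeConf_of_castSucc
    {d : ∀ q : ℕ, Fin (q + 2) → Kconf b c (q + 1) → Kconf b c (q + 2)} (hd : IsDoubling d) {n : ℕ}
    (i : Fin (n + 1)) {x : Kconf b c (n + 1)} (hx : CompleteConf (d n i.castSucc x)) :
    CompleteConf x := by
  obtain ⟨p, rfl⟩ := ConnectedComponents.surjective_coe x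
  obtain ⟨p, rfl, h⟩ := exists_isRightDouble i p
  rw [hd.right h, completeConf_mk_iff] at hx
  refine completeConf_mk_iff.2 fun k => ?_
  obtain ⟨j, hj⟩ := hx k
  rcases Fin.eq_self_or_eq_succAbove i.succ j with rfl | ⟨l, rfl⟩
  · exact ⟨i, by rw [forgetPt_apply, Fin.succAbove_succ_self, h.precedes.componentPt_eq, hj]⟩
  · exact ⟨l, hj⟩

/-- The coordinate of a point in its component if the latter is an interval; the value `0` on
circles only serves to make this a continuous function. -/
def intervalCoord : OneMfld b c → ℝ := Sum.elim 0 Prod.snd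

lemma continuous_intervalCoord : Continuous (intervalCoord : OneMfld b c → ℝ) :=
  continuous_zero.sumElim continuous_snd

lemma Precedes.intervalCoord_lt {k : Fin c} : ∀ {u x : OneMfld b c}, Precedes u x →
    componentPt u = .inr k → intervalCoord u < intervalCoord x
  | .inr _, .inr _, h, _ => h.2

lemma eq_of_intervalCoord_eq {k : Fin c} : ∀ {u x : OneMfld b c}, componentPt u = .inr k →
    componentPt x = .inr k → intervalCoord u = intervalCoord x → u = x
  | .inr _, .inr _, hu, hx, h => congrArg Sum.inr (Prod.ext (Sum.inr.inj (hu.trans hx.symm)) h)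

end Components

section OnePoint

variable {b c : ℕ}

lemma isRightDouble_zero_iff_precedes {p : Config b c 2} :
    IsRightDouble 0 p ↔ Precedes (p.1 0) (p.1 1) :=
  immAfter_iff_precedes (Fin.forall_fin_two.2 ⟨.inl rfl, .inr rfl⟩)

lemma isLeftDouble_iff_precedes {p : Config b c 2} :
    IsLeftDouble p ↔ Precedes (p.1 1) (p.1 0) :=
  immAfter_iff_precedes (Fin.forall_fin_two.2 ⟨.inr rfl, .inl rfl⟩)

lemma isClopen_setOf_intervalCoord_lt (k : Fin c) : IsClopen {p : Config b c 2 |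
    (componentPt (p.1 0) = .inr k ∧ componentPt (p.1 1) = .inr k) ∧
      intervalCoord (p.1 0) < intervalCoord (p.1 1)} := by
  have hcomp (j : Fin 2) : IsClopen {p : Config b c 2 | componentPt (p.1 j) = .inr k} :=
    (isClopen_discrete {Sum.inr k}).preimage (continuous_componentPt_apply j)
  have hcoord (j : Fin 2) : Continuous fun p : Config b c 2 => intervalCoord (p.1 j) :=
    continuous_intervalCoord.comp ((continuous_apply j).comp continuous_subtype_val)
  refine ⟨?_, ((hcomp 0).inter (hcomp 1)).isOpen.inter (isOpen_lt (hcoord 0) (hcoord 1))⟩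
  convert ((hcomp 0).inter (hcomp 1)).isClosed.inter (isClosed_le (hcoord 0) (hcoord 1)) using 1
  ext p
  refine and_congr_right fun hp => ⟨le_of_lt, fun h => h.lt_of_ne fun he => ?_⟩
  exact p.2.ne zero_ne_one (eq_of_intervalCoord_eq hp.1 hp.2 he)

lemma completeConf_mk_iff_forall_eq {p : Config b c 1} {k : Fin b}
    (hp : componentPt (p.1 0) = .inl k) :
    CompleteConf (ConnectedComponents.mk p) ↔ ∀ l, k = l := by
  simp [completeConf_mk_iff, hp]

lemma mk_eq_mk_of_componentPt_eq_inl {p p' : Config b c 1} {k : Fin b}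
    (hp : componentPt (p.1 0) = .inl k) (hp' : componentPt (p'.1 0) = .inl k) :
    ConnectedComponents.mk p = ConnectedComponents.mk p' := by
  let circle (u : Real.Angle) : Config b c 1 := ⟨fun _ => .inl (k, u), injective_of_subsingleton _⟩
  have hcircle : Continuous circle := by fun_prop
  have exists_eq {p : Config b c 1} (hp : componentPt (p.1 0) = .inl k) : ∃ u, p = circle u := by
    obtain ⟨u, hu⟩ := componentPt_eq_inl_iff.1 hp
    exact ⟨u, Subtype.ext (funext fun j => by rw [Subsingleton.elim j 0, hu])⟩
  obtain ⟨u, rfl⟩ := exists_eq hp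
  obtain ⟨u', rfl⟩ := exists_eq hp'
  have : PreconnectedSpace Real.Angle := inferInstanceAs (PreconnectedSpace (AddCircle _))
  exact TotallyDisconnectedSpace.eq_of_continuous _
    (ConnectedComponents.continuous_coe.comp hcircle) u u'

namespace IsDoubling

variable {d : ∀ q : ℕ, Fin (q + 2) → Kconf b c (q + 1) → Kconf b c (q + 2)} (hd : IsDoubling d)
include hd

lemma zero_eq_one_of_componentPt_eq_inl {p : Config b c 1} {k : Fin b}
    (hp : componentPt (p.1 0) = .inl k) :
    d 0 0 (ConnectedComponents.mk p) = d 0 1 (ConnectedComponents.mk p) := by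
  obtain ⟨p, rfl, h⟩ := exists_isRightDouble 0 p
  have hl : Precedes (p.1 1) (p.1 0) :=
    (isRightDouble_zero_iff_precedes.1 h).symm_of_componentPt_eq_inl hp
  exact (hd.right h).trans (hd.left (isLeftDouble_iff_precedes.2 hl)).symm

lemma zero_ne_one_of_componentPt_eq_inr {p : Config b c 1} {k : Fin c}
    (hp : componentPt (p.1 0) = .inr k) :
    d 0 0 (ConnectedComponents.mk p) ≠ d 0 1 (ConnectedComponents.mk p) := by
  obtain ⟨p₁, rfl, h₁⟩ := exists_isRightDouble 0 p
  obtain ⟨p₂, hp₂, h₂⟩ := exists_isLeftDouble (forgetPt (0 : Fin 1).succ p₁)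
  have hd₁ : d 0 0 (ConnectedComponents.mk (forgetPt (0 : Fin 1).succ p₁)) =
      ConnectedComponents.mk p₁ := hd.right h₁
  have hd₂ : d 0 1 (ConnectedComponents.mk (forgetPt (0 : Fin 1).succ p₁)) =
      ConnectedComponents.mk p₂ := hp₂ ▸ hd.left h₂
  have h₁ := isRightDouble_zero_iff_precedes.1 h₁
  have h₂ := isLeftDouble_iff_precedes.1 h₂
  rw [hd₁, hd₂, ne_comm, Ne, ConnectedComponents.coe_eq_coe']
  intro h
  obtain ⟨⟨-, hk⟩, hlt⟩ := (isClopen_setOf_intervalCoord_lt k).connectedComponent_subset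
    ⟨⟨hp, h₁.componentPt_eq ▸ hp⟩, h₁.intervalCoord_lt hp⟩ h
  exact hlt.not_gt (h₂.intervalCoord_lt hk)

lemma zero_eq_one_iff {p : Config b c 1} :
    d 0 0 (ConnectedComponents.mk p) = d 0 1 (ConnectedComponents.mk p) ↔
      ∃ k, componentPt (p.1 0) = .inl k := by
  rcases h : componentPt (p.1 0) with k | k
  · simp [hd.zero_eq_one_of_componentPt_eq_inl h]
  · simp [hd.zero_ne_one_of_componentPt_eq_inr h]

lemma isEmpty_completeConf_zero_eq_one (hb : b ≠ 1) :
    IsEmpty {x : KconfC b c 1 // d 0 0 x.1 = d 0 1 x.1} := by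
  refine ⟨fun ⟨⟨x, hx⟩, h⟩ => hb ?_⟩
  obtain ⟨p, rfl⟩ := ConnectedComponents.surjective_coe x
  obtain ⟨k, hk⟩ := hd.zero_eq_one_iff.1 h
  have hall := (completeConf_mk_iff_forall_eq hk).1 hx
  simpa using Fintype.card_eq_one_iff.2 ⟨k, fun l => (hall l).symm⟩

end IsDoubling

lemma IsDoubling.nonempty_unique_completeConf_zero_eq_one
    {d : ∀ q : ℕ, Fin (q + 2) → Kconf 1 c (q + 1) → Kconf 1 c (q + 2)} (hd : IsDoubling d) :
    Nonempty (Unique {x : KconfC 1 c 1 // d 0 0 x.1 = d 0 1 x.1}) := by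
  let p : Config 1 c 1 := ⟨fun _ => .inl (0, 0), injective_of_subsingleton _⟩
  have hp : componentPt (p.1 0) = .inl 0 := rfl
  have hpc : CompleteConf (ConnectedComponents.mk p) :=
    (completeConf_mk_iff_forall_eq hp).2 (Subsingleton.elim 0)
  refine ⟨⟨⟨⟨.mk p, hpc⟩, hd.zero_eq_one_of_componentPt_eq_inl hp⟩, ?_⟩⟩
  rintro ⟨⟨x, -⟩, hx⟩
  obtain ⟨p', rfl⟩ := ConnectedComponents.surjective_coe x
  obtain ⟨k, hk⟩ := hd.zero_eq_one_iff.1 hx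
  rw [Subsingleton.elim k 0] at hk
  exact Subtype.ext (Subtype.ext (mk_eq_mk_of_componentPt_eq_inl hk hp))

end OnePoint

theorem complete_configurations_homology_general (b c : ℕ)
    (d : ∀ q : ℕ, Fin (q + 2) → Kconf b c (q + 1) → Kconf b c (q + 2))
    (hd₁ : ∀ (q : ℕ) (i : Fin (q + 1)) (p : Config b c (q + 1)) (p' : Config b c (q + 2)),
        p'.1 ∘ Fin.succAbove (i.succ : Fin (q + 2)) = p.1 →
        ImmAfter p'.1 (p.1 i) (p'.1 (i.succ : Fin (q + 2))) →
        d q i.castSucc (ConnectedComponents.mk p) = ConnectedComponents.mk p')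
    (hd₂ : ∀ (q : ℕ) (p : Config b c (q + 1)) (p' : Config b c (q + 2)),
        p'.1 ∘ Fin.castSucc = p.1 →
        ImmAfter p'.1 (p'.1 (Fin.last (q + 1))) (p.1 0) →
        d q (Fin.last (q + 1)) (ConnectedComponents.mk p) = ConnectedComponents.mk p')
    (hd : ∀ (q : ℕ) (i : Fin (q + 2)) (x : Kconf b c (q + 1)),
        CompleteConf x → CompleteConf (d q i x)) :
    (∀ q : ℕ,
        LinearMap.ker (diffKc d hd (q + 1)) = LinearMap.range (diffKc d hd q)) ∧
    Nonempty (LinearMap.ker (diffKc d hd 0) ≃ₗ[ℤ]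
      ({x : KconfC b c 1 // d 0 0 x.1 = d 0 1 x.1} →₀ ℤ)) ∧
    (b = 1 → Nonempty (LinearMap.ker (diffKc d hd 0) ≃ₗ[ℤ] ℤ)) ∧
    (b ≠ 1 → LinearMap.ker (diffKc d hd 0) = ⊥) := by
  have hD : IsDoubling d :=
    ⟨fun {n i p} h => hd₁ n i _ p rfl (by rwa [forgetPt_apply, Fin.succAbove_succ_self]),
      fun {n p} h => hd₂ n _ p (by simp [forgetPt, Fin.succAbove_last])
        (by rwa [forgetPt_apply, Fin.succAbove_last_apply, Fin.castSucc_zero])⟩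
  have H := hD.isCartesianCofaces.subtype (P := fun _ => CompleteConf) hd
    fun _ _ => hD.completeConf_of_castSucc 0
  have hker : LinearMap.ker (diffKc d hd 0) =
      Finsupp.supported ℤ ℤ {x : KconfC b c 1 | d 0 0 x.1 = d 0 1 x.1} :=
    H.ker_cofaceDiff_zero.trans (by simp only [Subtype.mk.injEq])
  let E : LinearMap.ker (diffKc d hd 0) ≃ₗ[ℤ] ({x : KconfC b c 1 // d 0 0 x.1 = d 0 1 x.1} →₀ ℤ) :=
    (LinearEquiv.ofEq _ _ hker).trans (Finsupp.supportedEquivFinsupp _)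
  refine ⟨H.ker_cofaceDiff_succ, ⟨E⟩, ?_, fun hb => ?_⟩
  · rintro rfl
    obtain ⟨_⟩ := hD.nonempty_unique_completeConf_zero_eq_one
    exact ⟨E.trans (Finsupp.uniqueLinearEquiv ℤ ℤ default)⟩
  · have := hD.isEmpty_completeConf_zero_eq_one hb
    have := E.injective.subsingleton
    exact Submodule.eq_bot_of_subsingleton

theorem complete_configurations_homology (b c : ℕ)
    (d : ∀ q : ℕ, Fin (q + 2) → Kconf b c (q + 1) → Kconf b c (q + 2))
    -- `d^i`, `0 ≤ i ≤ q`, doubles `p_i` to its right ...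
    (hd₁ : ∀ (q : ℕ) (i : Fin (q + 1)) (p : Config b c (q + 1)) (p' : Config b c (q + 2)),
        p'.1 ∘ Fin.succAbove (i.succ : Fin (q + 2)) = p.1 →
        ImmAfter p'.1 (p.1 i) (p'.1 (i.succ : Fin (q + 2))) →
        d q i.castSucc (ConnectedComponents.mk p) = ConnectedComponents.mk p')
    -- ... and `d^{q+1}` doubles `p_0` to its left
    (hd₂ : ∀ (q : ℕ) (p : Config b c (q + 1)) (p' : Config b c (q + 2)),
        p'.1 ∘ Fin.castSucc = p.1 →
        ImmAfter p'.1 (p'.1 (Fin.last (q + 1))) (p.1 0) →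
        d q (Fin.last (q + 1)) (ConnectedComponents.mk p) = ConnectedComponents.mk p')
    -- the cofaces preserve completeness
    (hd : ∀ (q : ℕ) (i : Fin (q + 2)) (x : Kconf b c (q + 1)),
        CompleteConf x → CompleteConf (d q i x)) :
    -- the homology is concentrated in degree 0: exactness everywhere else
    (∀ q : ℕ,
        LinearMap.ker (diffKc d hd (q + 1)) = LinearMap.range (diffKc d hd q)) ∧
    -- the degree-0 homology (the kernel of the first differential) is free with one
    -- generator for each single-point configuration `x` with `d^0 x = d^1 x`
    Nonempty (LinearMap.ker (diffKc d hd 0) ≃ₗ[ℤ]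
      ({x : KconfC b c 1 // d 0 0 x.1 = d 0 1 x.1} →₀ ℤ)) ∧
    -- if `X` consists of circles only, the degree-0 homology is free of rank 1 when
    -- `b = 1` and vanishes when `b ≠ 1`
    (c = 0 → b = 1 → Nonempty (LinearMap.ker (diffKc d hd 0) ≃ₗ[ℤ] ℤ)) ∧
    (c = 0 → b ≠ 1 → LinearMap.ker (diffKc d hd 0) = ⊥) := by
  obtain ⟨h₁, h₂, h₃, h₄⟩ := complete_configurations_homology_general b c d hd₁ hd₂ hd
  exact ⟨h₁, h₂, fun _ => h₃, fun _ => h₄⟩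
end
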